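/- Let dB, dC be integers with 3 ≤ dB ≤ dC, and let α be a real number with 0 < α < logb 2 dB. Then there exists a ℂ-subspace (Submodule ℂ) S of ((Fin dB) × (Fin dC) → ℂ) of dimension (Module.finrank) equal to ⌊dB · dC · α^{5/2} / (1753 · (logb 2 dB)^{5/2})⌋ such that every unit vector v ∈ S satisfies E(v) ≥ logb 2 dB − (1/Real.log 2) · (dB/dC) − α. -/

import Mathlib

/-!
The subspace is the range of a random sign matrix, and the entropy is controlled through a family of
quadratic forms, so that no Lipschitz estimate for the entropy itself is needed.

For a vector `v` of `ℂ^dB ⊗ ℂ^dC`, an orthonormal basis `U` of the first factor and a probability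
vector `w`, let `rᵢ` be the diagonal entries of the reduced state of `v` in the basis `U`. If
`∑ wᵢˢ rᵢ ≤ c` for all `U` and `w`, then taking the eigenbasis and the spectrum `λ` gives
`∑ λᵢ¹⁺ˢ ≤ c`, and Jensen's inequality turns this into a lower bound `-ln c / (s ln 2)` for the
entanglement (`entg_ge_of_forms`). The supremum of the square roots of these forms is a seminorm
`twistNorm s` bounded by the norm. Weighted AM–GM bounds its square by the squared norm and the
purity of the reduced state (`twistNorm_sq_le`), and the mean purity of a random vector with
independent entries is small enough to bound the mean of this square by `dB dC κˢ`, where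
`κ = (dB + dC) / (dB dC)` (`expect_twistNorm_le`).

Let `G` be a matrix with independent entries `(±1 ± i) / √2`. For a unit vector `u`, the seminorm of
`G u` is a convex Lipschitz function of the signs, so it concentrates around its mean with a Gaussian
tail independent of the dimension. This is the infimal-convolution inequality `infConv_inequality`
on the discrete cube, proved by induction on the dimension from a two-point inequality. Upper
concentration of `‖G u‖` follows in the same way, and its lower concentration from independence of
the rows (`expect_exp_lower_le`). A union bound over a net (`exists_good`) controls these quantities
at all points of the net.

The exponent `5/2` comes from the passage from the net to the whole sphere. For a quadratic form
`‖T v‖²` an `e`-net loses only a factor `1 - e²` (`sq_norm_le_of_net`), because the supremum of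
`‖T* y‖` over the unit sphere is almost attained on the net in terms of inner products, so a net of
mesh `√x / 5`, `x = α / log₂ dB`, suffices to keep a relative precision of order `x`. Such a net has
about `(1 + 10 / √x) ^ (2 k)` points, the logarithm costs at most another factor `1 / √x`, and the
union bound succeeds as soon as `1753 k ≤ dB dC x ^ (5/2)`. With `s = 1 / (2 ln dB)` the resulting
bound on the forms is `c = κˢ e ^ (x / 2)`, and `-ln κ / ln 2 ≥ log₂ dB - dB / (dC ln 2)`.
-/

open scoped BigOperators Classical ComplexOrder Matrix

noncomputable section

/-- von Neumann entropy in bits of a (Hermitian) matrix, via its eigenvalues. -/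
def vnEntropy {n : Type*} [Fintype n] [DecidableEq n] (ρ : Matrix n n ℂ) : ℝ :=
  if h : ρ.IsHermitian then -∑ i, h.eigenvalues i * Real.logb 2 (h.eigenvalues i) else 0

/-- A density matrix: positive semidefinite with unit trace. -/
def IsDensityMatrix {n : Type*} [Fintype n] [DecidableEq n] (ρ : Matrix n n ℂ) : Prop :=
  ρ.PosSemidef ∧ ρ.trace = 1

/-- Partial trace over the second (C) factor. -/
def ptraceC {dB dC : ℕ} (M : Matrix (Fin dB × Fin dC) (Fin dB × Fin dC) ℂ) :
    Matrix (Fin dB) (Fin dB) ℂ := fun i k => ∑ j, M (i, j) (k, j)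

/-- Partial trace over the first (B) factor. -/
def ptraceB {dB dC : ℕ} (M : Matrix (Fin dB × Fin dC) (Fin dB × Fin dC) ℂ) :
    Matrix (Fin dC) (Fin dC) ℂ := fun j l => ∑ i, M (i, j) (i, l)

/-- Partial transpose (on the second factor). -/
def ptranspose {dB dC : ℕ} (M : Matrix (Fin dB × Fin dC) (Fin dB × Fin dC) ℂ) :
    Matrix (Fin dB × Fin dC) (Fin dB × Fin dC) ℂ := fun p q => M (p.1, q.2) (q.1, p.2)

/-- The pure state (rank-one projector) associated to a vector. -/
def pureState {ι : Type*} (v : ι → ℂ) : Matrix ι ι ℂ := Matrix.vecMulVec v (star v)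

/-- A unit vector. -/
def IsUnitVec {ι : Type*} [Fintype ι] (v : ι → ℂ) : Prop := ∑ x, Complex.normSq (v x) = 1

/-- Entanglement entropy of a bipartite pure state. -/
def entg {dB dC : ℕ} (v : Fin dB × Fin dC → ℂ) : ℝ := vnEntropy (ptraceC (pureState v))

/-- The n-fold tensor power of an isometry `U : A → B ⊗ C`. -/
def tensorPow {dA dB dC : ℕ} (U : Matrix (Fin dB × Fin dC) (Fin dA) ℂ) (n : ℕ) :
    Matrix (Fin n → Fin dB × Fin dC) (Fin n → Fin dA) ℂ :=
  fun f g => ∏ k, U (f k) (g k)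

/-- n-fold partial trace over the C factors. -/
def ptraceCn {dB dC n : ℕ}
    (M : Matrix (Fin n → Fin dB × Fin dC) (Fin n → Fin dB × Fin dC) ℂ) :
    Matrix (Fin n → Fin dB) (Fin n → Fin dB) ℂ :=
  fun fB gB => ∑ fC : Fin n → Fin dC, M (fun k => (fB k, fC k)) (fun k => (gB k, fC k))

/-- n-fold partial transpose over the C factors. -/
def ptransposeN {dB dC n : ℕ}
    (M : Matrix (Fin n → Fin dB × Fin dC) (Fin n → Fin dB × Fin dC) ℂ) :
    Matrix (Fin n → Fin dB × Fin dC) (Fin n → Fin dB × Fin dC) ℂ :=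
  fun f g => M (fun k => ((f k).1, (g k).2)) (fun k => ((g k).1, (f k).2))

/-- A POVM on the n-fold space implemented by one-way LOCC from C to B:
Charlie measures `(M x)` on `C^n`, sends `x`, and Bob measures `(B x i)` on `B^n`. -/
def IsOneWayLOCC {dB dC n N : ℕ}
    (Np : Fin N → Matrix (Fin n → Fin dB × Fin dC) (Fin n → Fin dB × Fin dC) ℂ) : Prop :=
  ∃ (m : ℕ) (M : Fin m → Matrix (Fin n → Fin dC) (Fin n → Fin dC) ℂ)
    (B : Fin m → Fin N → Matrix (Fin n → Fin dB) (Fin n → Fin dB) ℂ),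
    (∀ x, (M x).PosSemidef) ∧ (∑ x, M x) = 1 ∧
    (∀ x i, (B x i).PosSemidef) ∧ (∀ x, (∑ i, B x i) = 1) ∧
    (∀ i f g, Np i f g =
      ∑ x, B x i (fun k => (f k).1) (fun k => (g k).1) * M x (fun k => (f k).2) (fun k => (g k).2))

/-- The rate R is achievable with one-way LOCC (C→B) decoding for the isometry U. -/
def AchievableOneWayCB {dA dB dC : ℕ} (U : Matrix (Fin dB × Fin dC) (Fin dA) ℂ) (R : ℝ) : Prop :=
  ∀ ε : ℝ, 0 < ε → ∃ n₀ : ℕ, ∀ n : ℕ, n₀ ≤ n →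
    ∃ (N : ℕ) (φ : Fin N → (Fin n → Fin dB × Fin dC) → ℂ)
      (Np : Fin N → Matrix (Fin n → Fin dB × Fin dC) (Fin n → Fin dB × Fin dC) ℂ),
      (2 : ℝ) ^ ((n : ℝ) * (R - ε)) ≤ (N : ℝ) ∧
      (∀ i, IsUnitVec (φ i)) ∧
      (∀ i, ∃ ψ, (tensorPow U n).mulVec ψ = φ i) ∧
      IsOneWayLOCC Np ∧
      (∀ i, 1 - ε ≤ (Matrix.trace (pureState (φ i) * Np i)).re)

/-- Base-2 Shannon entropy. -/
def shannonEntropy {ι : Type*} [Fintype ι] (q : ι → ℝ) : ℝ := -∑ x, q x * Real.logb 2 (q x)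

/-! ### Concentration for convex functions on the discrete cube -/

/-- The real sign `±1` encoded by a Boolean. -/
def sg (b : Bool) : ℝ := if b then 1 else -1

lemma sg_true : sg true = 1 := by simp [sg]
lemma sg_false : sg false = -1 := by simp [sg]
lemma sg_sq (b : Bool) : sg b ^ 2 = 1 := by cases b <;> simp [sg]

lemma exp_neg_le_quadratic {m : ℝ} (hm : 0 ≤ m) : Real.exp (-m) ≤ 1 - m + m ^ 2 / 2 := by
  have h1 := Real.quadratic_le_exp_of_nonneg hm
  have h2 : 0 < 1 - m + m ^ 2 / 2 := by nlinarith [sq_nonneg (m - 1)]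
  rw [Real.exp_neg, inv_le_comm₀ (Real.exp_pos _) h2]
  refine le_trans ?_ h1
  rw [inv_le_iff_one_le_mul₀ h2]
  nlinarith [pow_nonneg hm 4]

lemma exp_le_cubic {z : ℝ} (hz : 0 ≤ z) (hz1 : z ≤ 1) :
    Real.exp z ≤ 1 + z + z ^ 2 / 2 + z ^ 3 / 4 := by
  have h := Real.exp_bound' hz hz1 (n := 3) (by norm_num)
  simp [Finset.sum_range_succ, Nat.factorial] at h
  have := pow_nonneg hz 3
  linarith

lemma two_point_scalar {m : ℝ} (hm : 0 ≤ m) (hm1 : m ≤ 1) :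
    Real.exp (m - m ^ 2) + Real.exp (-m) ≤ 2 := by
  have h1 := exp_neg_le_quadratic hm
  have h2 := exp_le_cubic (z := m - m ^ 2) (by nlinarith) (by nlinarith)
  have h3 : 0 ≤ m ^ 3 * (1 - m / 2 - (1 - m) ^ 3 / 4) := by
    refine mul_nonneg (pow_nonneg hm 3) ?_
    have : (1 - m) ^ 3 ≤ 1 := pow_le_one₀ (by linarith) (by linarith)
    nlinarith
  nlinarith

/-- Two-point case of the infimal-convolution inequality: `a`, `b` are the values of a convex
function at `1`, `-1`, and `p`, `q` are bounded by its infimal convolution with `y ↦ y² / 4`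
at these points. -/
lemma two_point {a b p q : ℝ}
    (hp : ∀ t ∈ Set.Icc (0 : ℝ) 1, p ≤ (1 - t) * a + t * b + t ^ 2)
    (hq : ∀ t ∈ Set.Icc (0 : ℝ) 1, q ≤ (1 - t) * b + t * a + t ^ 2) :
    (Real.exp p + Real.exp q) / 2 ≤ Real.exp ((a + b) / 2) := by
  wlog hab : b ≤ a generalizing a b p q
  · have := this hq hp (by linarith)
    rwa [add_comm, add_comm a]
  have key : ∀ m p' q' : ℝ, 0 ≤ m → (∀ t ∈ Set.Icc (0 : ℝ) 1, p' ≤ m - 2 * t * m + t ^ 2) →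
      q' ≤ -m → Real.exp p' + Real.exp q' ≤ 2 := by
    intro m p' q' hm h1 h2
    rcases le_total m 1 with h | h
    · refine le_trans (add_le_add (Real.exp_le_exp.2 ?_) (Real.exp_le_exp.2 h2))
        (two_point_scalar hm h)
      have := h1 m ⟨hm, h⟩
      nlinarith
    · have h3 := h1 1 ⟨zero_le_one, le_rfl⟩
      have : Real.exp p' ≤ 1 := by
        rw [Real.exp_le_one_iff]; nlinarith
      have : Real.exp q' ≤ 1 := by
        rw [Real.exp_le_one_iff]; nlinarith
      linarith
  have h := key ((a - b) / 2) (p - (a + b) / 2) (q - (a + b) / 2) (by linarith)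
    (fun t ht => by have := hp t ht; nlinarith) (by have := hq 0 ⟨le_rfl, zero_le_one⟩; nlinarith)
  rw [Real.exp_sub, Real.exp_sub, ← add_div, div_le_iff₀ (Real.exp_pos _)] at h
  linarith

lemma log_avg_exp_convex {a₁ b₁ a₂ b₂ s t : ℝ} (hs : 0 ≤ s) (ht : 0 ≤ t) (hst : s + t = 1) :
    Real.log ((Real.exp (s * a₁ + t * a₂) + Real.exp (s * b₁ + t * b₂)) / 2) ≤
      s * Real.log ((Real.exp a₁ + Real.exp b₁) / 2) +
        t * Real.log ((Real.exp a₂ + Real.exp b₂) / 2) := by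
  have pos : ∀ a b : ℝ, 0 < (Real.exp a + Real.exp b) / 2 := fun a b => by positivity
  set L₁ := Real.log ((Real.exp a₁ + Real.exp b₁) / 2) with hL₁
  set L₂ := Real.log ((Real.exp a₂ + Real.exp b₂) / 2) with hL₂
  have e₁ : Real.exp L₁ = (Real.exp a₁ + Real.exp b₁) / 2 := Real.exp_log (pos _ _)
  have e₂ : Real.exp L₂ = (Real.exp a₂ + Real.exp b₂) / 2 := Real.exp_log (pos _ _)
  rw [Real.log_le_iff_le_exp (pos _ _)]
  have conv : ∀ x y : ℝ, Real.exp (s * x + t * y) ≤ s * Real.exp x + t * Real.exp y := fun x y => by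
    simpa using convexOn_exp.2 (Set.mem_univ x) (Set.mem_univ y) hs ht hst
  have h1 := conv (a₁ - L₁) (a₂ - L₂)
  have h2 := conv (b₁ - L₁) (b₂ - L₂)
  have n₁ : Real.exp (a₁ - L₁) + Real.exp (b₁ - L₁) = 2 := by
    rw [Real.exp_sub, Real.exp_sub, ← add_div, e₁, div_div_eq_mul_div, mul_comm, mul_div_assoc,
      div_self (by positivity), mul_one]
  have n₂ : Real.exp (a₂ - L₂) + Real.exp (b₂ - L₂) = 2 := by
    rw [Real.exp_sub, Real.exp_sub, ← add_div, e₂, div_div_eq_mul_div, mul_comm, mul_div_assoc,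
      div_self (by positivity), mul_one]
  have h3 : Real.exp (s * (a₁ - L₁) + t * (a₂ - L₂)) + Real.exp (s * (b₁ - L₁) + t * (b₂ - L₂))
      ≤ 2 := by
    calc _ ≤ s * (Real.exp (a₁ - L₁) + Real.exp (b₁ - L₁)) +
          t * (Real.exp (a₂ - L₂) + Real.exp (b₂ - L₂)) := by linarith
      _ = 2 := by rw [n₁, n₂]; linarith
  have r : ∀ x y : ℝ, s * (x - L₁) + t * (y - L₂) = (s * x + t * y) - (s * L₁ + t * L₂) := by
    intros; ring
  rw [r, r, Real.exp_sub, Real.exp_sub, ← add_div, div_le_iff₀ (Real.exp_pos _)] at h3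
  linarith

/-- Infimal convolution of `f` in its first coordinate with `y ↦ (c - y)² / 4`. -/
def infConv {n : ℕ} (f : (Fin (n + 1) → ℝ) → ℝ) (c : ℝ) (z : Fin n → ℝ) : ℝ :=
  ⨅ y : ℝ, (f (Fin.cons y z) + (c - y) ^ 2 / 4)

section infConv

variable {n : ℕ} {f : (Fin (n + 1) → ℝ) → ℝ}

lemma infConv_bdd (h0 : ∀ x, 0 ≤ f x) (c : ℝ) (z : Fin n → ℝ) :
    BddBelow (Set.range fun y : ℝ => f (Fin.cons y z) + (c - y) ^ 2 / 4) :=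
  ⟨0, by rintro _ ⟨y, rfl⟩; have := h0 (Fin.cons y z); positivity⟩

lemma infConv_le (h0 : ∀ x, 0 ≤ f x) (c : ℝ) (z : Fin n → ℝ) (y : ℝ) :
    infConv f c z ≤ f (Fin.cons y z) + (c - y) ^ 2 / 4 :=
  ciInf_le (infConv_bdd h0 c z) y

lemma infConv_nonneg (h0 : ∀ x, 0 ≤ f x) (c : ℝ) (z : Fin n → ℝ) : 0 ≤ infConv f c z :=
  le_ciInf fun y => by have := h0 (Fin.cons y z); positivity

lemma infConv_convex (hf : ConvexOn ℝ Set.univ f) (h0 : ∀ x, 0 ≤ f x) (c : ℝ) (z₁ z₂ : Fin n → ℝ)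
    {s t : ℝ} (hs : 0 ≤ s) (ht : 0 ≤ t) (hst : s + t = 1) :
    infConv f c (s • z₁ + t • z₂) ≤ s * infConv f c z₁ + t * infConv f c z₂ := by
  refine le_of_forall_pos_le_add fun e he => ?_
  obtain ⟨y₁, h₁⟩ := exists_lt_of_ciInf_lt (lt_add_of_pos_right (infConv f c z₁) he)
  obtain ⟨y₂, h₂⟩ := exists_lt_of_ciInf_lt (lt_add_of_pos_right (infConv f c z₂) he)
  have h := infConv_le h0 c (s • z₁ + t • z₂) (s * y₁ + t * y₂)
  have hc : (Fin.cons (s * y₁ + t * y₂) (s • z₁ + t • z₂) : Fin (n + 1) → ℝ) =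
      s • Fin.cons y₁ z₁ + t • Fin.cons y₂ z₂ := by
    funext i; refine Fin.cases ?_ (fun j => ?_) i <;> simp
  have hcv := hf.2 (Set.mem_univ (Fin.cons y₁ z₁ : Fin (n + 1) → ℝ)) (Set.mem_univ (Fin.cons y₂ z₂))
    hs ht hst
  rw [hc] at h
  simp only [smul_eq_mul] at hcv
  have hsq : (c - (s * y₁ + t * y₂)) ^ 2 ≤ s * (c - y₁) ^ 2 + t * (c - y₂) ^ 2 := by
    have ht' : t = 1 - s := by linarith
    subst ht'
    nlinarith [mul_nonneg (mul_nonneg hs ht) (sq_nonneg (y₁ - y₂))]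
  nlinarith [mul_le_mul_of_nonneg_left h₁.le hs, mul_le_mul_of_nonneg_left h₂.le ht]

end infConv

lemma expect_bool (f : Bool → ℝ) : 𝔼 b, f b = (f true + f false) / 2 := by
  rw [Fintype.expect_eq_sum_div_card]; simp

lemma expect_fin_succ {n : ℕ} (F : (Fin (n + 1) → Bool) → ℝ) :
    𝔼 ω, F ω = 𝔼 ω : Fin n → Bool, (F (Fin.cons true ω) + F (Fin.cons false ω)) / 2 := by
  rw [← Fintype.expect_equiv (Fin.consEquiv fun _ => Bool) (fun p => F (Fin.cons p.1 p.2)) F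
    (fun p => rfl), ← Finset.univ_product_univ, Finset.expect_product, Finset.expect_comm]
  exact Finset.expect_congr rfl fun ω _ => expect_bool _

/-- Infimal-convolution inequality for convex functions on the discrete cube: if `h` is bounded
above by the infimal convolution of the convex function `f` with `‖·‖² / 4`, then the exponential
average of `h` is at most that of the mean of `f`. Stated with the bound on `h` in place of the
infimum, so that it can be used with any explicit minorant. -/
theorem infConv_inequality (n : ℕ) : ∀ (f : (Fin n → ℝ) → ℝ), ConvexOn ℝ Set.univ f →
    (∀ x, 0 ≤ f x) → ∀ h : (Fin n → Bool) → ℝ,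
    (∀ ω y, h ω ≤ f y + (∑ i, (sg (ω i) - y i) ^ 2) / 4) →
    𝔼 ω, Real.exp (h ω) ≤ Real.exp (𝔼 ω : Fin n → Bool, f (fun i => sg (ω i))) := by
  induction n with
  | zero =>
    intro f _ _ h hh
    rw [Fintype.expect_eq_sum_div_card, Fintype.expect_eq_sum_div_card]
    have h1 : ∀ ω : Fin 0 → Bool, h ω ≤ f (fun i => sg (ω i)) := fun ω => by
      simpa only [Finset.univ_eq_empty, Finset.sum_empty, zero_div, add_zero] using
        hh ω (fun i => sg (ω i))
    simp only [Finset.univ_unique, Finset.sum_singleton, Nat.cast_one, div_one,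
      Fintype.card_unique]
    exact Real.exp_le_exp.2 (h1 _)
  | succ n ih =>
    intro f hf h0 h hh
    set g : (Fin n → ℝ) → ℝ := fun z =>
      Real.log ((Real.exp (infConv f 1 z) + Real.exp (infConv f (-1) z)) / 2) with hg
    set k : (Fin n → Bool) → ℝ := fun ω =>
      Real.log ((Real.exp (h (Fin.cons true ω)) + Real.exp (h (Fin.cons false ω))) / 2) with hk
    have gconv : ConvexOn ℝ Set.univ g := by
      refine ⟨convex_univ, fun z₁ _ z₂ _ s t hs ht hst => ?_⟩
      refine le_trans (Real.log_le_log (by positivity) ?_) (log_avg_exp_convex hs ht hst)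
      have h1 := Real.exp_le_exp.2 (infConv_convex hf h0 1 z₁ z₂ hs ht hst)
      have h2 := Real.exp_le_exp.2 (infConv_convex hf h0 (-1) z₁ z₂ hs ht hst)
      linarith
    have g0 : ∀ z, 0 ≤ g z := fun z => by
      refine Real.log_nonneg ?_
      have h1 := Real.one_le_exp (infConv_nonneg h0 1 z)
      have h2 := Real.one_le_exp (infConv_nonneg h0 (-1) z)
      linarith
    have step : ∀ (b : Bool) (ω : Fin n → Bool) (z : Fin n → ℝ),
        h (Fin.cons b ω) ≤ infConv f (sg b) z + (∑ i, (sg (ω i) - z i) ^ 2) / 4 := by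
      intro b ω z
      rw [← sub_le_iff_le_add]
      refine le_ciInf fun y => ?_
      have := hh (Fin.cons b ω) (Fin.cons y z)
      rw [Fin.sum_univ_succ] at this
      simp only [Fin.cons_zero, Fin.cons_succ] at this
      linarith
    have hkg : ∀ ω z, k ω ≤ g z + (∑ i, (sg (ω i) - z i) ^ 2) / 4 := by
      intro ω z
      rw [hk, hg]
      simp only
      rw [Real.log_le_iff_le_exp (by positivity), Real.exp_add, Real.exp_log (by positivity)]
      have h1 := Real.exp_le_exp.2 (step true ω z)
      have h2 := Real.exp_le_exp.2 (step false ω z)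
      rw [Real.exp_add] at h1 h2
      rw [sg_true] at h1
      rw [sg_false] at h2
      linarith
    have main := ih g gconv g0 k hkg
    rw [expect_fin_succ, expect_fin_succ]
    refine le_trans (le_of_eq ?_) (le_trans main (Real.exp_le_exp.2 ?_))
    · refine Finset.expect_congr rfl fun ω _ => ?_
      rw [hk, Real.exp_log (by positivity)]
    · refine Finset.expect_le_expect fun ω _ => ?_
      have hcons : ∀ b, (fun i => sg ((Fin.cons b ω : Fin (n + 1) → Bool) i)) =
          Fin.cons (sg b) (fun i => sg (ω i)) := by
        intro b; funext i; refine Fin.cases ?_ (fun j => ?_) i <;> simp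
      rw [hg, hcons, hcons, sg_true, sg_false, Real.log_le_iff_le_exp (by positivity)]
      set z : Fin n → ℝ := fun i => sg (ω i)
      -- the section of `f` along the first coordinate lies below its chord on `[-1, 1]`
      have chord : ∀ u v t : ℝ, 0 ≤ t → t ≤ 1 → f (Fin.cons ((1 - t) * u + t * v) z) ≤
          (1 - t) * f (Fin.cons u z) + t * f (Fin.cons v z) := by
        intro u v t ht ht1
        have := hf.2 (Set.mem_univ (Fin.cons u z : Fin (n + 1) → ℝ)) (Set.mem_univ (Fin.cons v z))
          (sub_nonneg.2 ht1) ht (by ring)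
        convert! this using 2
        funext i; refine Fin.cases ?_ (fun j => ?_) i <;> simp
        ring
      refine two_point (fun t ht => ?_) (fun t ht => ?_)
      · have h1 := infConv_le h0 1 z ((1 - t) * 1 + t * (-1))
        have h2 := chord 1 (-1) t ht.1 ht.2
        nlinarith
      · have h1 := infConv_le h0 (-1) z ((1 - t) * (-1) + t * 1)
        have h2 := chord (-1) 1 t ht.1 ht.2
        nlinarith

/-- Dimension-free concentration for convex Lipschitz functions of independent signs, as a bound
on the moment generating function. -/
theorem expect_exp_convex_le {J : Type*} [Fintype J] [DecidableEq J] (F : (J → ℝ) → ℝ)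
    (hF : ConvexOn ℝ Set.univ F) (h0 : ∀ x, 0 ≤ F x) {V : ℝ}
    (hL : ∀ x y, (F x - F y) ≤ √(V * ∑ j, (x j - y j) ^ 2)) (hV : 0 ≤ V) {l : ℝ} (hl : 0 ≤ l) :
    𝔼 ω : J → Bool, Real.exp (l * F (fun j => sg (ω j))) ≤
      Real.exp (l * 𝔼 ω : J → Bool, F (fun j => sg (ω j)) + l ^ 2 * V) := by
  let e := Fintype.equivFin J
  let f : (Fin (Fintype.card J) → ℝ) → ℝ := fun x => l * F (fun j => x (e j))
  have hf : ConvexOn ℝ Set.univ f := by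
    refine ⟨convex_univ, fun x _ y _ s t hs ht hst => ?_⟩
    have := hF.2 (Set.mem_univ (fun j => x (e j))) (Set.mem_univ (fun j => y (e j))) hs ht hst
    simp only [f, smul_eq_mul] at this ⊢
    calc _ ≤ l * (s * F (fun j => x (e j)) + t * F (fun j => y (e j))) :=
          mul_le_mul_of_nonneg_left this hl
      _ = _ := by ring
  have key := infConv_inequality _ f hf (fun x => mul_nonneg hl (h0 _))
    (fun ω => f (fun i => sg (ω i)) - l ^ 2 * V) (fun ω y => by
      have h1 := hL (fun j => sg (ω (e j))) (fun j => y (e j))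
      have h2 : ∑ j, (sg (ω (e j)) - y (e j)) ^ 2 = ∑ i, (sg (ω i) - y i) ^ 2 :=
        Equiv.sum_comp e (fun i => (sg (ω i) - y i) ^ 2)
      rw [h2] at h1
      set D := ∑ i, (sg (ω i) - y i) ^ 2
      have hD : 0 ≤ D := Finset.sum_nonneg fun i _ => sq_nonneg _
      rw [Real.sqrt_mul hV] at h1
      have h3 := mul_le_mul_of_nonneg_left h1 hl
      have h4 := Real.sq_sqrt hV
      have h5 := Real.sq_sqrt hD
      simp only [f]
      nlinarith [sq_nonneg (l * √V - √D / 2)])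
  have tr : ∀ G : (J → Bool) → ℝ, 𝔼 ω : Fin (Fintype.card J) → Bool, G (fun j => ω (e j)) =
      𝔼 ω, G ω := fun G =>
    Fintype.expect_equiv (e.arrowCongr (Equiv.refl Bool)).symm _ _ fun ω => by
      congr 1
  have t1 := tr (fun ω => Real.exp (l * F (fun j => sg (ω j)) - l ^ 2 * V))
  have t2 := tr (fun ω => l * F (fun j => sg (ω j)))
  simp only [f] at key
  rw [t1, t2] at key
  simp only [Real.exp_sub] at key
  rw [← Finset.expect_div, div_le_iff₀ (Real.exp_pos _), ← Real.exp_add, ← Finset.mul_expect] at key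
  exact key

/-! ### Nets of the unit sphere -/

open MeasureTheory Metric in
/-- Volume bound: `e`-separated unit vectors in a real normed space of dimension `D` number at most
`(1 + 2 / e) ^ D`, since the balls of radius `e / 2` around them are disjoint and contained in the
ball of radius `1 + e / 2`. -/
lemma card_le_of_separated_sphere {E : Type*} [NormedAddCommGroup E] [NormedSpace ℝ E]
    [FiniteDimensional ℝ E] {e : ℝ} (he : 0 < e) (s : Finset E) (hs : ∀ c ∈ s, ‖c‖ = 1)
    (h : ∀ c ∈ s, ∀ d ∈ s, c ≠ d → e ≤ ‖c - d‖) :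
    (s.card : ℝ) ≤ (1 + 2 / e) ^ Module.finrank ℝ E := by
  borelize E
  let μ : Measure E := Measure.addHaar
  set δ : ℝ := e / 2 with hδ
  set r : ℝ := 1 + e / 2 with hr
  have δpos : 0 < δ := by positivity
  have rpos : 0 < r := by positivity
  set A := ⋃ c ∈ s, ball (c : E) δ with hA
  have D : Set.Pairwise (s : Set E) (Function.onFun Disjoint fun c => ball (c : E) δ) := by
    rintro c hc d hd hcd
    apply ball_disjoint_ball
    rw [dist_eq_norm]
    have := h c hc d hd hcd
    linarith
  have A_subset : A ⊆ ball (0 : E) r := by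
    refine Set.iUnion₂_subset fun x hx => ?_
    apply ball_subset_ball'
    rw [dist_zero_right, hs x hx]
    linarith
  have I : (s.card : ENNReal) * ENNReal.ofReal (δ ^ Module.finrank ℝ E) * μ (ball 0 1) ≤
      ENNReal.ofReal (r ^ Module.finrank ℝ E) * μ (ball 0 1) :=
    calc
      _ = μ A := by
        rw [hA, measure_biUnion_finset D fun c _ => measurableSet_ball]
        simp only [μ.addHaar_ball_of_pos _ δpos]
        simp only [Finset.sum_const, nsmul_eq_mul, mul_assoc]
      _ ≤ μ (ball (0 : E) r) := measure_mono A_subset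
      _ = _ := by simp only [μ.addHaar_ball_of_pos _ rpos]
  have J : (s.card : ENNReal) * ENNReal.ofReal (δ ^ Module.finrank ℝ E) ≤
      ENNReal.ofReal (r ^ Module.finrank ℝ E) :=
    (ENNReal.mul_le_mul_iff_left (measure_ball_pos _ _ zero_lt_one).ne' measure_ball_lt_top.ne).1 I
  have K := ENNReal.toReal_le_of_le_ofReal (pow_nonneg rpos.le _) J
  rw [ENNReal.toReal_mul, ENNReal.toReal_natCast,
    ENNReal.toReal_ofReal (pow_nonneg δpos.le _)] at K
  have hrd : 1 + 2 / e = r / δ := by rw [hr, hδ]; field_simp; ring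
  rw [hrd, div_pow, le_div_iff₀ (pow_pos δpos _)]
  exact K

/-- The unit sphere of a `D`-dimensional real normed space has an `e`-net with at most
`(1 + 2 / e) ^ D` points: take a separated set of maximal cardinality. -/
lemma exists_net {E : Type*} [NormedAddCommGroup E] [NormedSpace ℝ E]
    [FiniteDimensional ℝ E] {e : ℝ} (he : 0 < e) :
    ∃ s : Finset E, (∀ c ∈ s, ‖c‖ = 1) ∧ (s.card : ℝ) ≤ (1 + 2 / e) ^ Module.finrank ℝ E ∧
      ∀ v : E, ‖v‖ = 1 → ∃ c ∈ s, ‖v - c‖ ≤ e := by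
  let P : ℕ → Prop := fun m => ∃ s : Finset E, s.card = m ∧ (∀ c ∈ s, ‖c‖ = 1) ∧
    ∀ c ∈ s, ∀ d ∈ s, c ≠ d → e ≤ ‖c - d‖
  set b := ⌊(1 + 2 / e) ^ Module.finrank ℝ E⌋₊
  have hP0 : P 0 := ⟨∅, by simp, by simp, by simp⟩
  obtain ⟨s, hcard, hs, hsep⟩ : P (Nat.findGreatest P b) := Nat.findGreatest_spec (Nat.zero_le _) hP0
  refine ⟨s, hs, card_le_of_separated_sphere he s hs hsep, fun v hv => ?_⟩
  by_contra! hcon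
  have hvs : v ∉ s := fun hmem => by have := hcon v hmem; simp at this; linarith
  have hsep' : ∀ c ∈ insert v s, ∀ d ∈ insert v s, c ≠ d → e ≤ ‖c - d‖ := by
    intro c hc d hd hcd
    rcases Finset.mem_insert.1 hc with hcv | hc <;> rcases Finset.mem_insert.1 hd with hdv | hd
    · exact absurd (hcv.trans hdv.symm) hcd
    · rw [hcv]; exact (hcon d hd).le
    · rw [norm_sub_rev, hdv]; exact (hcon c hc).le
    · exact hsep c hc d hd hcd
  have hs' : ∀ c ∈ insert v s, ‖c‖ = 1 := fun c hc => by
    rcases Finset.mem_insert.1 hc with rfl | hc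
    exacts [hv, hs c hc]
  have hle : (insert v s).card ≤ b := Nat.le_floor (card_le_of_separated_sphere he _ hs' hsep')
  have hP : P (insert v s).card := ⟨_, rfl, hs', hsep'⟩
  have := Nat.le_findGreatest hle hP
  rw [Finset.card_insert_of_notMem hvs, ← hcard] at this
  omega

/-- A positive semidefinite form `x ↦ ‖C x‖²` bounded by `β` on an `e`-net of the unit sphere is
bounded by `β / (1 - e²)` on the whole sphere. The loss is quadratic in `e`: a net point `e`-close
to the direction of `C† y` has inner product at least `1 - e² / 2` with that direction. -/
lemma sq_norm_le_of_net {E F : Type*} [NormedAddCommGroup E] [InnerProductSpace ℂ E]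
    [NormedAddCommGroup F] [InnerProductSpace ℂ F] [CompleteSpace E] [CompleteSpace F]
    (T : E →L[ℂ] F) {e β : ℝ} (he1 : e ^ 2 < 1) (hβ : 0 ≤ β) (s : Set E)
    (hs : ∀ c ∈ s, ‖c‖ = 1) (hnet : ∀ v : E, ‖v‖ = 1 → ∃ c ∈ s, ‖v - c‖ ≤ e)
    (hT : ∀ c ∈ s, ‖T c‖ ^ 2 ≤ β) (v : E) :
    (1 - e ^ 2) * ‖T v‖ ^ 2 ≤ β * ‖v‖ ^ 2 := by
  have hδ : 0 < 1 - e ^ 2 / 2 := by nlinarith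
  have adj : ∀ y : F, (1 - e ^ 2 / 2) * ‖ContinuousLinearMap.adjoint T y‖ ≤ √β * ‖y‖ := by
    intro y
    set w := ContinuousLinearMap.adjoint T y with hw
    rcases eq_or_ne w 0 with h0 | h0
    · rw [h0, norm_zero, mul_zero]; positivity
    have hwn : 0 < ‖w‖ := norm_pos_iff.2 h0
    obtain ⟨c, hc, hce⟩ := hnet (((‖w‖⁻¹ : ℝ) : ℂ) • w) (by
      rw [norm_smul]; simp [hwn.ne'])
    have hc1 := hs c hc
    have h1 : ‖((‖w‖⁻¹ : ℝ) : ℂ) • w - c‖ ^ 2 = 2 - 2 * (‖w‖⁻¹ * (inner ℂ w c).re) := by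
      rw [@norm_sub_sq ℂ, inner_smul_left, norm_smul, hc1]
      simp [hwn.ne']
      ring
    have h2 : (1 - e ^ 2 / 2) ≤ ‖w‖⁻¹ * (inner ℂ w c).re := by
      have : ‖((‖w‖⁻¹ : ℝ) : ℂ) • w - c‖ ^ 2 ≤ e ^ 2 := pow_le_pow_left₀ (norm_nonneg _) hce 2
      linarith
    have h3 : (inner ℂ w c).re ≤ ‖y‖ * ‖T c‖ := by
      rw [hw, ContinuousLinearMap.adjoint_inner_left]
      exact re_inner_le_norm (𝕜 := ℂ) y (T c)
    have h4 : ‖T c‖ ≤ √β := Real.le_sqrt_of_sq_le (hT c hc)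
    calc (1 - e ^ 2 / 2) * ‖w‖ ≤ (‖w‖⁻¹ * (inner ℂ w c).re) * ‖w‖ :=
          mul_le_mul_of_nonneg_right h2 hwn.le
      _ = (inner ℂ w c).re := by field_simp
      _ ≤ ‖y‖ * ‖T c‖ := h3
      _ ≤ √β * ‖y‖ := by nlinarith [norm_nonneg y]
  have h1 : ‖T v‖ ^ 2 ≤ ‖ContinuousLinearMap.adjoint T (T v)‖ * ‖v‖ := by
    rw [← @inner_self_eq_norm_sq ℂ, ← ContinuousLinearMap.adjoint_inner_left]
    exact re_inner_le_norm (𝕜 := ℂ) _ _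
  have h2 : (1 - e ^ 2 / 2) * ‖T v‖ ≤ √β * ‖v‖ := by
    rcases (norm_nonneg (T v)).eq_or_lt with h0 | h0
    · rw [← h0, mul_zero]; positivity
    have h3 := adj (T v)
    have : (1 - e ^ 2 / 2) * ‖T v‖ ^ 2 ≤ √β * ‖T v‖ * ‖v‖ := by
      calc _ ≤ (1 - e ^ 2 / 2) * (‖ContinuousLinearMap.adjoint T (T v)‖ * ‖v‖) :=
            mul_le_mul_of_nonneg_left h1 hδ.le
        _ = ((1 - e ^ 2 / 2) * ‖ContinuousLinearMap.adjoint T (T v)‖) * ‖v‖ := by ring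
        _ ≤ _ := mul_le_mul_of_nonneg_right h3 (norm_nonneg _)
    refine le_of_mul_le_mul_right ?_ h0
    linarith
  have h3 := pow_le_pow_left₀ (by positivity) h2 2
  rw [mul_pow, mul_pow, Real.sq_sqrt hβ] at h3
  refine le_trans (mul_le_mul_of_nonneg_right ?_ (sq_nonneg _)) h3
  nlinarith [sq_nonneg (e ^ 2)]

/-! ### Entanglement and quadratic forms -/

section Forms

variable {dB dC : ℕ}

/-- The squared norm of the `i`-th row of `Uᴴ v`, where `v` is read as a `dB × dC` matrix; this is
the `i`-th diagonal entry of the reduced state of `v` in the orthonormal basis given by `U`. -/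
def rowWeight (U : Matrix (Fin dB) (Fin dB) ℂ) (v : Fin dB × Fin dC → ℂ) (i : Fin dB) : ℝ :=
  ∑ j, ‖∑ b, star (U b i) * v (b, j)‖ ^ 2

/-- `v` read as a `dB × dC` matrix. -/
def vecMat (v : Fin dB × Fin dC → ℂ) : Matrix (Fin dB) (Fin dC) ℂ := Matrix.of fun b j => v (b, j)

lemma ptraceC_pureState (v : Fin dB × Fin dC → ℂ) :
    ptraceC (pureState v) = vecMat v * (vecMat v)ᴴ := by
  ext i k
  simp [ptraceC, pureState, Matrix.vecMulVec, Matrix.mul_apply, vecMat]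

lemma rowWeight_nonneg (U : Matrix (Fin dB) (Fin dB) ℂ) (v : Fin dB × Fin dC → ℂ) (i : Fin dB) :
    0 ≤ rowWeight U v i := Finset.sum_nonneg fun _ _ => sq_nonneg _

lemma rowWeight_eq_diag (U : Matrix (Fin dB) (Fin dB) ℂ) (v : Fin dB × Fin dC → ℂ) (i : Fin dB) :
    (rowWeight U v i : ℂ) = (Uᴴ * (vecMat v * (vecMat v)ᴴ) * U) i i := by
  have h : Uᴴ * (vecMat v * (vecMat v)ᴴ) * U = (Uᴴ * vecMat v) * (Uᴴ * vecMat v)ᴴ := by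
    rw [Matrix.conjTranspose_mul, Matrix.conjTranspose_conjTranspose]
    simp only [Matrix.mul_assoc]
  rw [h, Matrix.mul_apply, rowWeight]
  push_cast
  refine Finset.sum_congr rfl fun j _ => ?_
  rw [Matrix.conjTranspose_apply, Complex.star_def, Complex.mul_conj']
  simp [Matrix.mul_apply, vecMat]

lemma sum_rowWeight {U : Matrix (Fin dB) (Fin dB) ℂ} (hU : U ∈ Matrix.unitaryGroup (Fin dB) ℂ)
    (v : Fin dB × Fin dC → ℂ) : ∑ i, rowWeight U v i = ∑ p, ‖v p‖ ^ 2 := by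
  have h1 : ((∑ i, rowWeight U v i : ℝ) : ℂ) = (vecMat v * (vecMat v)ᴴ).trace := by
    push_cast
    simp only [rowWeight_eq_diag]
    change (Uᴴ * (vecMat v * (vecMat v)ᴴ) * U).trace = _
    rw [Matrix.trace_mul_comm, ← Matrix.mul_assoc, ← Matrix.star_eq_conjTranspose U,
      (Matrix.mem_unitaryGroup_iff.1 hU), Matrix.one_mul]
  have h2 : (vecMat v * (vecMat v)ᴴ).trace = ((∑ p, ‖v p‖ ^ 2 : ℝ) : ℂ) := by
    rw [Fintype.sum_prod_type, Matrix.trace]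
    push_cast
    refine Finset.sum_congr rfl fun b _ => ?_
    rw [Matrix.diag_apply, Matrix.mul_apply]
    refine Finset.sum_congr rfl fun j _ => ?_
    rw [Matrix.conjTranspose_apply, Complex.star_def, Complex.mul_conj']
    simp [vecMat]
  exact_mod_cast h1.trans h2

lemma sum_normSq_eq_trace {m n : Type*} [Fintype m] [Fintype n] (A : Matrix m n ℂ) :
    ((∑ i, ∑ k, ‖A i k‖ ^ 2 : ℝ) : ℂ) = (A * Aᴴ).trace := by
  rw [Matrix.trace]
  push_cast
  refine Finset.sum_congr rfl fun b _ => ?_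
  rw [Matrix.diag_apply, Matrix.mul_apply]
  refine Finset.sum_congr rfl fun j _ => ?_
  rw [Matrix.conjTranspose_apply, Complex.star_def, Complex.mul_conj']

/-- The purity of the reduced state, `tr ρ²`, as a quartic form in `v`. -/
def purity (v : Fin dB × Fin dC → ℂ) : ℝ :=
  ∑ b, ∑ b', ‖∑ j, v (b, j) * star (v (b', j))‖ ^ 2

/-- The squared diagonal entries of the reduced state, in any basis, sum to at most its purity. -/
lemma sum_sq_rowWeight_le {U : Matrix (Fin dB) (Fin dB) ℂ}
    (hU : U ∈ Matrix.unitaryGroup (Fin dB) ℂ) (v : Fin dB × Fin dC → ℂ) :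
    ∑ i, rowWeight U v i ^ 2 ≤ purity v := by
  set ρ := vecMat v * (vecMat v)ᴴ with hρ
  set A := Uᴴ * ρ * U with hA
  have hUU : U * Uᴴ = 1 := Matrix.mem_unitaryGroup_iff.1 hU
  have h1 : ∑ i, ∑ k, ‖A i k‖ ^ 2 = purity v := by
    have h : ((∑ i, ∑ k, ‖A i k‖ ^ 2 : ℝ) : ℂ) = ((∑ i, ∑ k, ‖ρ i k‖ ^ 2 : ℝ) : ℂ) := by
      rw [sum_normSq_eq_trace, sum_normSq_eq_trace]
      have : A * Aᴴ = Uᴴ * (ρ * ρᴴ) * U := by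
        rw [hA, Matrix.conjTranspose_mul, Matrix.conjTranspose_mul,
          Matrix.conjTranspose_conjTranspose]
        calc Uᴴ * ρ * U * (Uᴴ * (ρᴴ * U)) = Uᴴ * ρ * (U * Uᴴ) * (ρᴴ * U) := by
              simp only [Matrix.mul_assoc]
          _ = _ := by rw [hUU]; simp only [Matrix.mul_assoc, Matrix.one_mul]
      rw [this, Matrix.trace_mul_comm, ← Matrix.mul_assoc, hUU, Matrix.one_mul]
    rw [Complex.ofReal_inj] at h
    rw [h, purity]
    simp [hρ, vecMat, Matrix.mul_apply]
  rw [← h1]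
  refine Finset.sum_le_sum fun i _ => ?_
  have h2 : rowWeight U v i = ‖A i i‖ := by
    rw [hA, ← rowWeight_eq_diag, Complex.norm_real, Real.norm_of_nonneg (rowWeight_nonneg _ _ _)]
  rw [h2]
  exact Finset.single_le_sum (f := fun k => ‖A i k‖ ^ 2) (fun k _ => sq_nonneg _)
    (Finset.mem_univ i)

/-- A uniform bound on the weighted forms `∑ wᵢˢ rᵢ` bounds the entanglement from below: in the
eigenbasis of the reduced state, with `w` its spectrum, the form is `∑ λᵢ¹⁺ˢ`, whose logarithm
controls the entropy by Jensen's inequality. -/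
lemma entg_ge_of_forms {v : Fin dB × Fin dC → ℂ} (hv : IsUnitVec v) {s c : ℝ} (hs : 0 < s)
    (hc : 0 < c)
    (h : ∀ U ∈ Matrix.unitaryGroup (Fin dB) ℂ, ∀ w : Fin dB → ℝ, (∀ i, 0 ≤ w i) → ∑ i, w i = 1 →
      ∑ i, w i ^ s * rowWeight U v i ≤ c) :
    -Real.log c / (s * Real.log 2) ≤ entg v := by
  have hρ : (ptraceC (pureState v)).PosSemidef := by
    rw [ptraceC_pureState]; exact Matrix.posSemidef_self_mul_conjTranspose _
  have hH := hρ.isHermitian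
  rw [entg, vnEntropy, dif_pos hH]
  set l := hH.eigenvalues with hl
  have hl0 : ∀ i, 0 ≤ l i := hρ.eigenvalues_nonneg
  have hU := (hH.eigenvectorUnitary).2
  set U : Matrix (Fin dB) (Fin dB) ℂ := hH.eigenvectorUnitary.1 with hUdef
  have hrow : ∀ i, rowWeight U v i = l i := by
    intro i
    have h1 := rowWeight_eq_diag U v i
    rw [← ptraceC_pureState] at h1
    have h2 : Uᴴ * ptraceC (pureState v) * U = Matrix.diagonal (fun i => (l i : ℂ)) := by
      have := hH.conjStarAlgAut_star_eigenvectorUnitary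
      rw [Unitary.conjStarAlgAut_apply] at this
      simpa [Matrix.star_eq_conjTranspose, Function.comp_def] using this
    rw [h2, Matrix.diagonal_apply_eq] at h1
    exact_mod_cast h1
  have hsum : ∑ i, l i = 1 := by
    rw [← Finset.sum_congr rfl fun i _ => hrow i, sum_rowWeight hU]
    rw [IsUnitVec] at hv
    simpa [Complex.normSq_eq_norm_sq] using hv
  have hmain := h U hU l hl0 hsum
  simp only [hrow] at hmain
  have hterm : ∀ i, s * (l i * Real.log (l i)) ≤
      l i * (Real.log c - 1) + (l i ^ s * l i) / c := by
    intro i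
    rcases (hl0 i).eq_or_lt with h0 | h0
    · rw [← h0]; simp
    have hp := Real.rpow_pos_of_pos h0 s
    have h1 := Real.log_le_sub_one_of_pos (div_pos hp hc)
    rw [Real.log_div hp.ne' hc.ne', Real.log_rpow h0] at h1
    have h2 := mul_le_mul_of_nonneg_left h1 h0.le
    have h3 : (l i ^ s * l i) / c = l i * (l i ^ s / c) := by ring
    rw [h3]
    linarith
  have hS := Finset.sum_le_sum fun i (_ : i ∈ Finset.univ) => hterm i
  rw [← Finset.mul_sum, Finset.sum_add_distrib, ← Finset.sum_mul, ← Finset.sum_div, hsum] at hS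
  have h4 : (∑ i, l i ^ s * l i) / c ≤ 1 := (div_le_one hc).2 hmain
  have hlog2 : 0 < Real.log 2 := Real.log_pos one_lt_two
  have h5 : -∑ i, l i * Real.logb 2 (l i) = (-∑ i, l i * Real.log (l i)) / Real.log 2 := by
    rw [neg_div, Finset.sum_div]
    simp [Real.logb, mul_div_assoc]
  rw [h5, div_le_div_iff₀ (by positivity) hlog2]
  nlinarith

end Forms

/-! ### The seminorm controlling the entropy -/

section Twist

variable {dB dC : ℕ}

/-- The linear map whose squared norm is the form `∑ wᵢˢ rᵢ`: rotate the first factor by `Uᴴ` and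
damp its `i`-th coordinate by `wᵢ^(s/2)`. -/
def twist (s : ℝ) (U : Matrix (Fin dB) (Fin dB) ℂ) (w : Fin dB → ℝ) :
    EuclideanSpace ℂ (Fin dB × Fin dC) →ₗ[ℂ] EuclideanSpace ℂ (Fin dB × Fin dC) where
  toFun v := WithLp.toLp 2 fun p => ((w p.1 ^ (s / 2) : ℝ) : ℂ) * ∑ b, star (U b p.1) * v (b, p.2)
  map_add' v v' := by
    ext p
    simp only [PiLp.add_apply, mul_add, Finset.sum_add_distrib]
  map_smul' a v := by
    ext p
    simp only [PiLp.smul_apply, smul_eq_mul, RingHom.id_apply, Finset.mul_sum]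
    exact Finset.sum_congr rfl fun b _ => by ring

/-- An orthonormal basis of the first factor together with a probability distribution. -/
abbrev Frame (d : ℕ) : Type :=
  {x : Matrix (Fin d) (Fin d) ℂ × (Fin d → ℝ) //
    x.1 ∈ Matrix.unitaryGroup (Fin d) ℂ ∧ (∀ i, 0 ≤ x.2 i) ∧ ∑ i, x.2 i = 1}

lemma Frame.le_one {d : ℕ} (x : Frame d) (i : Fin d) : x.1.2 i ≤ 1 :=
  (Finset.single_le_sum (f := x.1.2) (fun i _ => x.2.2.1 i) (Finset.mem_univ i)).trans_eq x.2.2.2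

/-- The seminorm `v ↦ sup (∑ wᵢˢ rᵢ)^(1/2)`, over all bases and all distributions `w`. It is the
square root of the Schatten `p`-norm, `p = 1 / (1 - s)`, of the reduced state of `v`. -/
def twistNorm (s : ℝ) (v : EuclideanSpace ℂ (Fin dB × Fin dC)) : ℝ :=
  ⨆ x : Frame dB, ‖twist s x.1.1 x.1.2 v‖

lemma norm_sq_twist (s : ℝ) (U : Matrix (Fin dB) (Fin dB) ℂ) {w : Fin dB → ℝ} (hw : ∀ i, 0 ≤ w i)
    (v : EuclideanSpace ℂ (Fin dB × Fin dC)) :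
    ‖twist s U w v‖ ^ 2 = ∑ i, w i ^ s * rowWeight U v i := by
  rw [EuclideanSpace.norm_sq_eq, Fintype.sum_prod_type]
  refine Finset.sum_congr rfl fun i _ => ?_
  rw [rowWeight, Finset.mul_sum]
  refine Finset.sum_congr rfl fun j _ => ?_
  have h : (w i ^ (s / 2)) ^ 2 = w i ^ s := by
    rw [← Real.rpow_natCast, ← Real.rpow_mul (hw i)]; norm_num
  simp only [twist, LinearMap.coe_mk, AddHom.coe_mk]
  rw [norm_mul, mul_pow, Complex.norm_real, Real.norm_eq_abs, sq_abs, h]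

lemma norm_twist_le {s : ℝ} (hs : 0 ≤ s) (x : Frame dB)
    (v : EuclideanSpace ℂ (Fin dB × Fin dC)) : ‖twist s x.1.1 x.1.2 v‖ ≤ ‖v‖ := by
  refine (sq_le_sq₀ (norm_nonneg _) (norm_nonneg _)).1 ?_
  rw [norm_sq_twist s _ x.2.2.1, EuclideanSpace.norm_sq_eq, ← sum_rowWeight x.2.1]
  refine Finset.sum_le_sum fun i _ => ?_
  exact mul_le_of_le_one_left (rowWeight_nonneg _ _ _)
    (Real.rpow_le_one (x.2.2.1 i) (Frame.le_one x i) hs)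

lemma le_twistNorm {s : ℝ} (hs : 0 ≤ s) (x : Frame dB) (v : EuclideanSpace ℂ (Fin dB × Fin dC)) :
    ‖twist s x.1.1 x.1.2 v‖ ≤ twistNorm s v :=
  le_ciSup (f := fun x : Frame dB => ‖twist s x.1.1 x.1.2 v‖)
    ⟨‖v‖, by rintro _ ⟨y, rfl⟩; exact norm_twist_le hs y v⟩ x

lemma twistNorm_nonneg (s : ℝ) (v : EuclideanSpace ℂ (Fin dB × Fin dC)) : 0 ≤ twistNorm s v :=
  Real.iSup_nonneg fun _ => norm_nonneg _

lemma twistNorm_le {s : ℝ} (hs : 0 ≤ s) (v : EuclideanSpace ℂ (Fin dB × Fin dC)) :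
    twistNorm s v ≤ ‖v‖ := Real.iSup_le (fun x => norm_twist_le hs x v) (norm_nonneg _)

lemma twistNorm_add_le {s : ℝ} (hs : 0 ≤ s) (v v' : EuclideanSpace ℂ (Fin dB × Fin dC)) :
    twistNorm s (v + v') ≤ twistNorm s v + twistNorm s v' := by
  refine Real.iSup_le (fun x => ?_) (add_nonneg (twistNorm_nonneg s v) (twistNorm_nonneg s v'))
  rw [map_add]
  exact (norm_add_le _ _).trans (add_le_add (le_twistNorm hs x v) (le_twistNorm hs x v'))

lemma twistNorm_smul_le {s : ℝ} (hs : 0 ≤ s) {a : ℝ} (ha : 0 ≤ a)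
    (v : EuclideanSpace ℂ (Fin dB × Fin dC)) :
    twistNorm s ((a : ℂ) • v) ≤ a * twistNorm s v := by
  refine Real.iSup_le (fun x => ?_) (mul_nonneg ha (twistNorm_nonneg s v))
  rw [map_smul, norm_smul, Complex.norm_real, Real.norm_of_nonneg ha]
  exact mul_le_mul_of_nonneg_left (le_twistNorm hs x v) ha

/-- Weighted AM–GM, which decouples the weight `w` from the quantity `r`. -/
lemma weight_le {s κ N r w : ℝ} (hs : 0 ≤ s) (hs2 : s ≤ 1 / 2) (hκ : 0 < κ) (hN : 0 < N)
    (hr : 0 ≤ r) (hw : 0 ≤ w) :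
    w ^ s * r ≤ N * κ ^ s * ((1 - 2 * s) * (r / N) + s * (r ^ 2 / (N ^ 2 * κ)) + s * w) := by
  have hκs := Real.rpow_pos_of_pos hκ s
  rcases hr.eq_or_lt with h0 | h0
  · rw [← h0]; simp; positivity
  have h := Real.geom_mean_le_arith_mean3_weighted (by linarith : 0 ≤ 1 - 2 * s) hs hs
    (by positivity : 0 ≤ r / N) (by positivity : 0 ≤ r ^ 2 / (N ^ 2 * κ)) hw (by ring)
  have hz : 0 < r / N := by positivity
  have h1 : (r / N) ^ (1 - 2 * s) * (r ^ 2 / (N ^ 2 * κ)) ^ s = r / N / κ ^ s := by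
    have : r ^ 2 / (N ^ 2 * κ) = (r / N) ^ (2 : ℝ) / κ := by
      rw [Real.rpow_two]; field_simp
    rw [this, Real.div_rpow (by positivity) hκ.le, ← Real.rpow_mul hz.le, mul_div_assoc',
      ← Real.rpow_add hz]
    simp
  rw [h1] at h
  calc w ^ s * r = N * κ ^ s * (r / N / κ ^ s * w ^ s) := by field_simp
    _ ≤ _ := mul_le_mul_of_nonneg_left h (by positivity)

lemma purity_nonneg (v : Fin dB × Fin dC → ℂ) : 0 ≤ purity v :=
  Finset.sum_nonneg fun _ _ => Finset.sum_nonneg fun _ _ => sq_nonneg _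

/-- The seminorm is controlled by the norm and the purity of the reduced state alone; `κ` is the
purity at which the bound is tight. -/
lemma twistNorm_sq_le {s κ N : ℝ} (hs : 0 ≤ s) (hs2 : s ≤ 1 / 2) (hκ : 0 < κ) (hN : 0 < N)
    (v : EuclideanSpace ℂ (Fin dB × Fin dC)) :
    twistNorm s v ^ 2 ≤
      N * κ ^ s * ((1 - 2 * s) * (‖v‖ ^ 2 / N) + s * (purity v / (N ^ 2 * κ)) + s) := by
  have hP := purity_nonneg (v : Fin dB × Fin dC → ℂ)
  set R := N * κ ^ s * ((1 - 2 * s) * (‖v‖ ^ 2 / N) + s * (purity v / (N ^ 2 * κ)) + s) with hR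
  have hκs := Real.rpow_pos_of_pos hκ s
  have h2s : 0 ≤ 1 - 2 * s := by linarith
  have hR0 : 0 ≤ R := by positivity
  suffices h : twistNorm s v ≤ √R by
    calc _ ≤ √R ^ 2 := pow_le_pow_left₀ (twistNorm_nonneg s v) h 2
      _ = R := Real.sq_sqrt hR0
  refine Real.iSup_le (fun x => Real.le_sqrt_of_sq_le ?_) (Real.sqrt_nonneg _)
  rw [norm_sq_twist s _ x.2.2.1]
  calc ∑ i, x.1.2 i ^ s * rowWeight x.1.1 v i
      ≤ ∑ i, N * κ ^ s * ((1 - 2 * s) * (rowWeight x.1.1 v i / N) +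
          s * (rowWeight x.1.1 v i ^ 2 / (N ^ 2 * κ)) + s * x.1.2 i) :=
        Finset.sum_le_sum fun i _ =>
          weight_le hs hs2 hκ hN (rowWeight_nonneg _ _ _) (x.2.2.1 i)
    _ = N * κ ^ s * ((1 - 2 * s) * ((∑ i, rowWeight x.1.1 v i) / N) +
          s * ((∑ i, rowWeight x.1.1 v i ^ 2) / (N ^ 2 * κ)) + s * ∑ i, x.1.2 i) := by
        rw [← Finset.mul_sum, Finset.sum_add_distrib, Finset.sum_add_distrib, ← Finset.mul_sum,
          ← Finset.mul_sum, ← Finset.mul_sum, Finset.sum_div, Finset.sum_div]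
    _ ≤ R := by
        rw [hR, sum_rowWeight x.2.1, x.2.2.2, EuclideanSpace.norm_sq_eq, mul_one]
        have := sum_sq_rowWeight_le x.2.1 (v : Fin dB × Fin dC → ℂ)
        gcongr

end Twist

/-! ### Moments of a random row -/

/-- Resampling one coordinate does not change an expectation. -/
lemma expect_update {I A M : Type*} [Fintype I] [DecidableEq I] [Fintype A] [Nonempty A] [AddCommMonoid M]
    [Module ℚ≥0 M] (i : I) (h : (I → A) → M) :
    𝔼 ω, h ω = 𝔼 ω, 𝔼 a, h (Function.update ω i a) := by
  have hinv : ∀ p : (I → A) × A,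
      (Function.update (Function.update p.1 i p.2) i (p.1 i), Function.update p.1 i p.2 i) = p := by
    intro p; ext <;> simp
  let e : (I → A) × A ≃ (I → A) × A :=
    { toFun := fun p => (Function.update p.1 i p.2, p.1 i)
      invFun := fun p => (Function.update p.1 i p.2, p.1 i)
      left_inv := hinv
      right_inv := hinv }
  have h1 : 𝔼 p : (I → A) × A, h (Function.update p.1 i p.2) = 𝔼 p : (I → A) × A, h p.1 :=
    Fintype.expect_equiv e _ _ fun p => rfl
  rw [← Finset.univ_product_univ, Finset.expect_product, Finset.expect_product] at h1
  rw [h1]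
  exact Finset.expect_congr rfl fun ω _ => (Fintype.expect_const _).symm

/-- A function of one coordinate is independent of a function of the others. -/
lemma expect_mul_indep {I A K : Type*} [Fintype I] [DecidableEq I] [Fintype A] [Nonempty A] [Field K] [CharZero K]
    (i : I) (f : A → K) (g : (I → A) → K) (hg : ∀ ω a, g (Function.update ω i a) = g ω) :
    𝔼 ω : I → A, f (ω i) * g ω = (𝔼 a, f a) * 𝔼 ω, g ω := by
  rw [expect_update i]
  simp only [Function.update_self, hg]
  simp only [← Finset.expect_mul, ← Finset.mul_expect]

lemma expect_coord {I A K : Type*} [Fintype I] [DecidableEq I] [Fintype A] [Nonempty A] [Field K] [CharZero K]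
    (i : I) (f : A → K) : 𝔼 ω : I → A, f (ω i) = 𝔼 a, f a := by
  simpa using expect_mul_indep i f (fun _ => 1) fun _ _ => rfl

lemma expect_prod {I A : Type*} [Fintype I] [DecidableEq I] [Fintype A] (f : A → ℝ) :
    𝔼 ω : I → A, ∏ i, f (ω i) = (𝔼 a, f a) ^ Fintype.card I := by
  rw [Fintype.expect_eq_sum_div_card, Fintype.expect_eq_sum_div_card, div_pow, Fintype.card_fun]
  have := Finset.prod_univ_sum (fun _ : I => (Finset.univ : Finset A)) (fun _ => f)
  rw [Fintype.piFinset_univ, Finset.prod_const, Finset.card_univ] at this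
  rw [← this]
  push_cast
  rfl

lemma ofReal_expect' {I : Type*} [Fintype I] [DecidableEq I] (f : I → ℝ) :
    ((𝔼 i, f i : ℝ) : ℂ) = 𝔼 i, (f i : ℂ) := by
  rw [Fintype.expect_eq_sum_div_card, Fintype.expect_eq_sum_div_card]
  push_cast
  rfl

/-- The normalized complex number with real and imaginary parts `x true`, `x false`. -/
def cplx (x : Bool → ℝ) : ℂ := ((√2)⁻¹ : ℝ) * ((x true : ℂ) + (x false : ℂ) * Complex.I)

lemma inv_sqrt_two_sq : ((√2)⁻¹ : ℝ) ^ 2 = 1 / 2 := by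
  rw [inv_pow, Real.sq_sqrt (by norm_num)]; norm_num

lemma norm_sq_cplx (x : Bool → ℝ) : ‖cplx x‖ ^ 2 = (x true ^ 2 + x false ^ 2) / 2 := by
  rw [cplx, norm_mul, mul_pow, ← Complex.normSq_eq_norm_sq (_ + _), Complex.normSq_add_mul_I,
    Complex.norm_real, Real.norm_eq_abs, sq_abs, inv_sqrt_two_sq]
  ring

/-- The value in one row of the random matrix applied to `u`. -/
def rowVal {k : Type*} [Fintype k] (u : k → ℂ) (r : k → Bool → Bool) : ℂ :=
  ∑ a, cplx (fun c => sg (r a c)) * u a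

lemma expect_four (f : ℝ → ℝ → ℝ) : 𝔼 e : Bool → Bool, f (sg (e true)) (sg (e false)) =
    (f 1 1 + f 1 (-1) + f (-1) 1 + f (-1) (-1)) / 4 := by
  rw [Fintype.expect_equiv (Equiv.boolArrowEquivProd Bool)
    (fun e : Bool → Bool => f (sg (e true)) (sg (e false)))
    (fun p : Bool × Bool => f (sg p.2) (sg p.1)) (fun e => rfl), ← Finset.univ_product_univ,
    Finset.expect_product, expect_bool, expect_bool, expect_bool]
  simp only [sg_true, sg_false]
  ring

lemma norm_sq_column_add (t a b : ℝ) (u w : ℂ) :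
    ‖(t : ℂ) * ((a : ℂ) + (b : ℂ) * Complex.I) * u + w‖ ^ 2 =
      (t * (a * u.re - b * u.im) + w.re) ^ 2 + (t * (a * u.im + b * u.re) + w.im) ^ 2 := by
  rw [← Complex.normSq_eq_norm_sq, Complex.normSq_apply]
  simp
  ring

/-- Second moment after adding one independent column. -/
lemma expect_norm_sq_add (u w : ℂ) :
    𝔼 e : Bool → Bool, ‖cplx (fun c => sg (e c)) * u + w‖ ^ 2 = ‖u‖ ^ 2 + ‖w‖ ^ 2 := by
  simp only [cplx, norm_sq_column_add]
  have ht := inv_sqrt_two_sq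
  generalize (√2)⁻¹ = t at *
  rw [expect_four fun a b => (t * (a * u.re - b * u.im) + w.re) ^ 2 +
      (t * (a * u.im + b * u.re) + w.im) ^ 2, ← Complex.normSq_eq_norm_sq,
    ← Complex.normSq_eq_norm_sq, Complex.normSq_apply, Complex.normSq_apply]
  linear_combination (2 * (u.re ^ 2 + u.im ^ 2)) * ht

/-- Fourth moment after adding one independent column. -/
lemma expect_norm_four_add (u w : ℂ) :
    𝔼 e : Bool → Bool, (‖cplx (fun c => sg (e c)) * u + w‖ ^ 2) ^ 2 =
      (‖u‖ ^ 2) ^ 2 + 4 * ‖u‖ ^ 2 * ‖w‖ ^ 2 + (‖w‖ ^ 2) ^ 2 := by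
  simp only [cplx, norm_sq_column_add]
  have ht := inv_sqrt_two_sq
  generalize (√2)⁻¹ = t at *
  rw [expect_four fun a b => ((t * (a * u.re - b * u.im) + w.re) ^ 2 +
      (t * (a * u.im + b * u.re) + w.im) ^ 2) ^ 2, ← Complex.normSq_eq_norm_sq,
    ← Complex.normSq_eq_norm_sq, Complex.normSq_apply, Complex.normSq_apply]
  have h4 : t ^ 4 = 1 / 4 := by
    rw [show (4 : ℕ) = 2 * 2 from rfl, pow_mul, ht]; norm_num
  ring_nf
  simp only [ht, h4]
  ring

section Row

variable {k : Type*} [Fintype k] [DecidableEq k] (u : k → ℂ)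

lemma partial_moments (s : Finset k) :
    𝔼 r : k → Bool → Bool, ‖∑ a ∈ s, cplx (fun c => sg (r a c)) * u a‖ ^ 2 =
        ∑ a ∈ s, ‖u a‖ ^ 2 ∧
      𝔼 r : k → Bool → Bool, (‖∑ a ∈ s, cplx (fun c => sg (r a c)) * u a‖ ^ 2) ^ 2 ≤
        2 * (∑ a ∈ s, ‖u a‖ ^ 2) ^ 2 := by
  induction s using Finset.induction_on with
  | empty => simp
  | insert a s ha ih =>
    have hupd : ∀ (r : k → Bool → Bool) e,
        ∑ b ∈ insert a s, cplx (fun c => sg (Function.update r a e b c)) * u b =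
          cplx (fun c => sg (e c)) * u a + ∑ b ∈ s, cplx (fun c => sg (r b c)) * u b := by
      intro r e
      rw [Finset.sum_insert ha, Function.update_self]
      congr 1
      refine Finset.sum_congr rfl fun b hb => ?_
      rw [Function.update_of_ne (ne_of_mem_of_not_mem hb ha)]
    obtain ⟨h1, h2⟩ := ih
    rw [expect_update a, expect_update a (fun r : k → Bool → Bool =>
      (‖∑ b ∈ insert a s, cplx (fun c => sg (r b c)) * u b‖ ^ 2) ^ 2)]
    simp only [hupd, expect_norm_sq_add, expect_norm_four_add, Finset.expect_add_distrib,
      ← Finset.mul_expect, h1, Fintype.expect_const, Finset.sum_insert ha]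
    refine ⟨trivial, ?_⟩
    nlinarith [sq_nonneg (‖u a‖ ^ 2)]

lemma expect_norm_sq_rowVal : 𝔼 r, ‖rowVal u r‖ ^ 2 = ∑ a, ‖u a‖ ^ 2 :=
  (partial_moments u Finset.univ).1

lemma expect_norm_four_rowVal_le : 𝔼 r, (‖rowVal u r‖ ^ 2) ^ 2 ≤ 2 * (∑ a, ‖u a‖ ^ 2) ^ 2 :=
  (partial_moments u Finset.univ).2

lemma expect_rowVal : 𝔼 r, rowVal u r = 0 := by
  have h : ∀ b : Bool, sg (!b) = -sg b := by intro b; cases b <;> simp [sg]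
  have hneg : ∀ r : k → Bool → Bool, rowVal u (fun a c => !(r a c)) = -rowVal u r := by
    intro r
    simp only [rowVal, cplx, h, ← Finset.sum_neg_distrib]
    refine Finset.sum_congr rfl fun a _ => ?_
    push_cast
    ring
  let e : (k → Bool → Bool) ≃ (k → Bool → Bool) :=
    { toFun := fun r a c => !(r a c)
      invFun := fun r a c => !(r a c)
      left_inv := fun r => by simp
      right_inv := fun r => by simp }
  have h1 : 𝔼 r, rowVal u r = 𝔼 r, -rowVal u r :=
    Fintype.expect_equiv e _ _ fun r => by rw [show e r = fun a c => !(r a c) from rfl, hneg, neg_neg]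
  rw [Finset.expect_neg_distrib] at h1
  exact self_eq_neg.1 h1

lemma expect_exp_neg_rowVal_le (hu : ∑ a, ‖u a‖ ^ 2 = 1) {l : ℝ} (hl : 0 ≤ l) :
    𝔼 r, Real.exp (-(l * ‖rowVal u r‖ ^ 2)) ≤ Real.exp (-l + l ^ 2) := by
  calc 𝔼 r, Real.exp (-(l * ‖rowVal u r‖ ^ 2))
      ≤ 𝔼 r, (1 + -l * ‖rowVal u r‖ ^ 2 + l ^ 2 / 2 * (‖rowVal u r‖ ^ 2) ^ 2) := by
        refine Finset.expect_le_expect fun r _ => ?_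
        refine (exp_neg_le_quadratic (by positivity)).trans (le_of_eq ?_)
        ring
    _ = 1 + -l * 1 + l ^ 2 / 2 * 𝔼 r, (‖rowVal u r‖ ^ 2) ^ 2 := by
        rw [Finset.expect_add_distrib, Finset.expect_add_distrib, ← Finset.mul_expect,
          ← Finset.mul_expect, expect_norm_sq_rowVal, hu, Fintype.expect_const]
    _ ≤ 1 + -l * 1 + l ^ 2 / 2 * 2 := by
        have := expect_norm_four_rowVal_le u
        rw [hu] at this
        have hl2 : 0 ≤ l ^ 2 / 2 := by positivity
        nlinarith
    _ ≤ Real.exp (-l + l ^ 2) := by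
        have := Real.add_one_le_exp (-l + l ^ 2)
        linarith

end Row

/-! ### Mean purity of a random vector -/

section Purity

variable {R : Type*} [Fintype R] [Nonempty R] {y : R → ℂ}

lemma expect_pair {I : Type*} [Fintype I] [DecidableEq I] (h2 : 𝔼 r, ‖y r‖ ^ 2 = 1) {p q : I} (hpq : p ≠ q) :
    𝔼 ω : I → R, ‖y (ω p)‖ ^ 2 * ‖y (ω q)‖ ^ 2 = 1 := by
  rw [expect_mul_indep p (fun r => ‖y r‖ ^ 2) (fun ω => ‖y (ω q)‖ ^ 2)
    (fun ω a => by rw [Function.update_of_ne hpq.symm]), expect_coord q fun r => ‖y r‖ ^ 2, h2,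
    one_mul]

lemma expect_purity_diag {J I : Type*} [Fintype I] [DecidableEq I] [Fintype J] (h2 : 𝔼 r, ‖y r‖ ^ 2 = 1)
    (h4 : 𝔼 r, (‖y r‖ ^ 2) ^ 2 ≤ 2) (f : J → I) (hf : Function.Injective f) :
    𝔼 ω : I → R, ‖∑ j, y (ω (f j)) * star (y (ω (f j)))‖ ^ 2 ≤
      Fintype.card J + (Fintype.card J : ℝ) ^ 2 := by
  have h : ∀ ω : I → R, ‖∑ j, y (ω (f j)) * star (y (ω (f j)))‖ ^ 2 =
      ∑ j, ∑ j', ‖y (ω (f j))‖ ^ 2 * ‖y (ω (f j'))‖ ^ 2 := by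
    intro ω
    have : ∑ j, y (ω (f j)) * star (y (ω (f j))) = ((∑ j, ‖y (ω (f j))‖ ^ 2 : ℝ) : ℂ) := by
      push_cast
      exact Finset.sum_congr rfl fun j _ => by rw [Complex.star_def, Complex.mul_conj']
    rw [this, Complex.norm_real, Real.norm_eq_abs, sq_abs, sq, Finset.sum_mul_sum]
  simp only [h, Finset.expect_sum_comm]
  calc ∑ j, ∑ j', 𝔼 ω : I → R, ‖y (ω (f j))‖ ^ 2 * ‖y (ω (f j'))‖ ^ 2
      ≤ ∑ j : J, ∑ j' : J, (1 + if j = j' then (1 : ℝ) else 0) := by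
        refine Finset.sum_le_sum fun j _ => Finset.sum_le_sum fun j' _ => ?_
        split_ifs with hj
        · subst hj
          have := expect_coord (f j) fun r => (‖y r‖ ^ 2) ^ 2
          simp only [sq (‖y _‖ ^ 2)] at this h4
          rw [this]
          linarith
        · rw [expect_pair h2 (hf.ne hj), add_zero]
    _ = _ := by
        simp [Finset.sum_add_distrib]
        ring

lemma expect_purity_offdiag {J I : Type*} [Fintype I] [DecidableEq I] [Fintype J] (h1 : 𝔼 r, y r = 0)
    (h2 : 𝔼 r, ‖y r‖ ^ 2 = 1) (f f' : J → I) (hf : Function.Injective f)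
    (hff : ∀ j j', f j ≠ f' j') :
    𝔼 ω : I → R, ‖∑ j, y (ω (f j)) * star (y (ω (f' j)))‖ ^ 2 = Fintype.card J := by
  have h : ∀ ω : I → R, ((‖∑ j, y (ω (f j)) * star (y (ω (f' j)))‖ ^ 2 : ℝ) : ℂ) =
      ∑ j, ∑ j', y (ω (f j)) * (star (y (ω (f' j))) * (star (y (ω (f j'))) * y (ω (f' j')))) := by
    intro ω
    push_cast
    rw [← Complex.mul_conj', map_sum, Finset.sum_mul_sum]
    refine Finset.sum_congr rfl fun j _ => Finset.sum_congr rfl fun j' _ => ?_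
    simp
    ring
  have key : ∀ j j' : J, 𝔼 ω : I → R,
      y (ω (f j)) * (star (y (ω (f' j))) * (star (y (ω (f j'))) * y (ω (f' j')))) =
        if j = j' then 1 else 0 := by
    intro j j'
    split_ifs with hj
    · subst hj
      have : ∀ ω : I → R,
          y (ω (f j)) * (star (y (ω (f' j))) * (star (y (ω (f j))) * y (ω (f' j)))) =
            ((‖y (ω (f j))‖ ^ 2 * ‖y (ω (f' j))‖ ^ 2 : ℝ) : ℂ) := by
        intro ω
        push_cast
        rw [← Complex.mul_conj', ← Complex.mul_conj', Complex.star_def]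
        ring
      simp only [this]
      rw [← ofReal_expect', expect_pair h2 (hff j j), Complex.ofReal_one]
    · rw [expect_mul_indep (f j) y
        (fun ω => star (y (ω (f' j))) * (star (y (ω (f j'))) * y (ω (f' j')))), h1, zero_mul]
      intro ω a
      rw [Function.update_of_ne (hff j j).symm, Function.update_of_ne (hff j j').symm,
        Function.update_of_ne (hf.ne (Ne.symm hj))]
  have : ((𝔼 ω : I → R, ‖∑ j, y (ω (f j)) * star (y (ω (f' j)))‖ ^ 2 : ℝ) : ℂ) =
      Fintype.card J := by
    rw [ofReal_expect']
    simp only [h, Finset.expect_sum_comm, key]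
    simp
  exact_mod_cast this

/-- Mean purity of a vector with independent, centred, normalized entries of fourth moment at most
`2`, the value for a complex Gaussian. -/
lemma expect_purity_le {dB dC : ℕ} (h1 : 𝔼 r, y r = 0) (h2 : 𝔼 r, ‖y r‖ ^ 2 = 1)
    (h4 : 𝔼 r, (‖y r‖ ^ 2) ^ 2 ≤ 2) :
    𝔼 ω : Fin dB × Fin dC → R, purity (fun p => y (ω p)) ≤ (dB * dC : ℝ) * (dB + dC) := by
  simp only [purity, Finset.expect_sum_comm]
  calc _ ≤ ∑ b : Fin dB, ∑ b' : Fin dB, ((dC : ℝ) + if b = b' then (dC : ℝ) ^ 2 else 0) := by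
        refine Finset.sum_le_sum fun b _ => Finset.sum_le_sum fun b' _ => ?_
        split_ifs with hb
        · subst hb
          have := expect_purity_diag h2 h4 (fun j : Fin dC => (b, j)) (Prod.mk_right_injective b)
          rwa [Fintype.card_fin] at this
        · have := expect_purity_offdiag h1 h2 (fun j : Fin dC => (b, j)) (fun j => (b', j))
            (Prod.mk_right_injective b) fun j j' h => hb (congrArg Prod.fst h)
          rw [Fintype.card_fin] at this
          rw [this, add_zero]
    _ = _ := by
        simp [Finset.sum_add_distrib]
        ring

end Purity

/-! ### Concentration for the random matrix -/

section Ensemble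

variable {I k : Type*} [Fintype k]

/-- The random matrix, with real and imaginary parts of its entries collected in `x`, applied to
the vector `u`. -/
def randVec (x : I × k × Bool → ℝ) (u : k → ℂ) : EuclideanSpace ℂ I :=
  WithLp.toLp 2 fun p => ∑ a, cplx (fun c => x (p, a, c)) * u a

/-- The signs of a point of the discrete cube. -/
def signs (ω : I × k × Bool → Bool) : I × k × Bool → ℝ := fun j => sg (ω j)

lemma randVec_lin (u : k → ℂ) (s t : ℝ) (x y : I × k × Bool → ℝ) :
    randVec (s • x + t • y) u = (s : ℂ) • randVec x u + (t : ℂ) • randVec y u := by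
  ext p
  simp only [randVec, PiLp.add_apply, PiLp.smul_apply, smul_eq_mul, Finset.mul_sum,
    ← Finset.sum_add_distrib]
  refine Finset.sum_congr rfl fun a _ => ?_
  simp only [cplx, Pi.add_apply, Pi.smul_apply, smul_eq_mul]
  push_cast
  ring

variable [Fintype I]

lemma norm_sq_randVec_le (x : I × k × Bool → ℝ) (u : k → ℂ) (hu : ∑ a, ‖u a‖ ^ 2 = 1) :
    ‖randVec x u‖ ^ 2 ≤ 1 / 2 * ∑ j, x j ^ 2 := by
  rw [EuclideanSpace.norm_sq_eq, Fintype.sum_prod_type, Finset.mul_sum]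
  refine Finset.sum_le_sum fun p _ => ?_
  have h1 : ‖∑ a, cplx (fun c => x (p, a, c)) * u a‖ ≤ ∑ a, ‖cplx (fun c => x (p, a, c))‖ * ‖u a‖ :=
    (norm_sum_le _ _).trans_eq (Finset.sum_congr rfl fun a _ => norm_mul _ _)
  have h2 := Finset.sum_mul_sq_le_sq_mul_sq Finset.univ
    (fun a => ‖cplx (fun c => x (p, a, c))‖) (fun a => ‖u a‖)
  rw [hu, mul_one] at h2
  refine (pow_le_pow_left₀ (norm_nonneg _) h1 2).trans (h2.trans (le_of_eq ?_))
  rw [Fintype.sum_prod_type, Finset.mul_sum]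
  refine Finset.sum_congr rfl fun a _ => ?_
  rw [norm_sq_cplx, Fintype.sum_bool]
  ring

variable [DecidableEq I] [DecidableEq k]

lemma expect_randVec {M : Type*} [AddCommMonoid M] [Module ℚ≥0 M] (u : k → ℂ)
    (f : EuclideanSpace ℂ I → M) :
    𝔼 ω : I × k × Bool → Bool, f (randVec (signs ω) u) =
      𝔼 ω : I → k → Bool → Bool, f (WithLp.toLp 2 fun p => rowVal u (ω p)) :=
  Fintype.expect_equiv ((Equiv.curry I (k × Bool) Bool).trans
    (Equiv.arrowCongr (Equiv.refl I) (Equiv.curry k Bool Bool))) _ _ fun _ => rfl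

/-- Concentration of a seminorm of a random vector above its mean. -/
lemma expect_exp_seminorm_le (q : EuclideanSpace ℂ I → ℝ) (h0 : ∀ v, 0 ≤ q v)
    (hadd : ∀ v w, q (v + w) ≤ q v + q w)
    (hsmul : ∀ a : ℝ, 0 ≤ a → ∀ v, q ((a : ℂ) • v) ≤ a * q v) (hle : ∀ v, q v ≤ ‖v‖)
    {u : k → ℂ} (hu : ∑ a, ‖u a‖ ^ 2 = 1) {m t : ℝ} (ht : 0 ≤ t)
    (hm : 𝔼 ω : I × k × Bool → Bool, q (randVec (signs ω) u) ≤ m) :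
    𝔼 ω : I × k × Bool → Bool, Real.exp (t * (q (randVec (signs ω) u) - (m + t))) ≤
      Real.exp (-(t ^ 2 / 2)) := by
  have hconv : ConvexOn ℝ Set.univ fun x : I × k × Bool → ℝ => q (randVec x u) := by
    refine ⟨convex_univ, fun x _ y _ s r hs hr _ => ?_⟩
    change q (randVec (s • x + r • y) u) ≤ s * q (randVec x u) + r * q (randVec y u)
    rw [randVec_lin]
    exact (hadd _ _).trans (add_le_add (hsmul s hs _) (hsmul r hr _))
  have hlip : ∀ x y : I × k × Bool → ℝ,
      q (randVec x u) - q (randVec y u) ≤ √(1 / 2 * ∑ j, (x j - y j) ^ 2) := by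
    intro x y
    have h1 : randVec x u = randVec (x - y) u + randVec y u := by
      have := randVec_lin u 1 1 (x - y) y
      simpa using this
    have h2 := hadd (randVec (x - y) u) (randVec y u)
    rw [← h1] at h2
    have h3 : ‖randVec (x - y) u‖ ≤ √(1 / 2 * ∑ j, (x j - y j) ^ 2) :=
      Real.le_sqrt_of_sq_le (norm_sq_randVec_le (x - y) u hu)
    linarith [hle (randVec (x - y) u)]
  have h : 𝔼 ω : I × k × Bool → Bool, Real.exp (t * q (randVec (signs ω) u)) ≤
      Real.exp (t * (𝔼 ω : I × k × Bool → Bool, q (randVec (signs ω) u)) + t ^ 2 * (1 / 2)) :=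
    expect_exp_convex_le _ hconv (fun x => h0 _) hlip (by norm_num) ht
  have h1 : ∀ ω : I × k × Bool → Bool, Real.exp (t * (q (randVec (signs ω) u) - (m + t))) =
      Real.exp (-(t * (m + t))) * Real.exp (t * q (randVec (signs ω) u)) := by
    intro ω
    rw [← Real.exp_add]
    congr 1
    ring
  simp only [h1]
  rw [← Finset.mul_expect]
  calc _ ≤ Real.exp (-(t * (m + t))) * Real.exp (t * m + t ^ 2 * (1 / 2)) := by
        refine mul_le_mul_of_nonneg_left (h.trans (Real.exp_le_exp.2 ?_)) (Real.exp_pos _).le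
        have := mul_le_mul_of_nonneg_left hm ht
        linarith
    _ = _ := by
        rw [← Real.exp_add]
        congr 1
        ring

lemma expect_norm_sq_randVec {u : k → ℂ} (hu : ∑ a, ‖u a‖ ^ 2 = 1) :
    𝔼 ω : I × k × Bool → Bool, ‖randVec (signs ω) u‖ ^ 2 = Fintype.card I := by
  rw [expect_randVec u fun v : EuclideanSpace ℂ I => ‖v‖ ^ 2]
  simp only [EuclideanSpace.norm_sq_eq]
  rw [Finset.expect_sum_comm]
  have : ∀ p : I, 𝔼 ω : I → k → Bool → Bool, ‖rowVal u (ω p)‖ ^ 2 = 1 := by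
    intro p
    rw [expect_coord p fun r => ‖rowVal u r‖ ^ 2, expect_norm_sq_rowVal, hu]
  simp only [this]
  simp

lemma expect_le_sqrt {Ω : Type*} [Fintype Ω] [Nonempty Ω] (f : Ω → ℝ) {A : ℝ} (hA : 0 < A)
    (h : 𝔼 ω, f ω ^ 2 ≤ A) : 𝔼 ω, f ω ≤ √A := by
  have ha : 0 < √A := Real.sqrt_pos.2 hA
  have hsq : √A ^ 2 = A := Real.sq_sqrt hA.le
  calc 𝔼 ω, f ω ≤ 𝔼 ω, (1 / (2 * √A) * f ω ^ 2 + √A / 2) := by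
        refine Finset.expect_le_expect fun ω _ => ?_
        have : 1 / (2 * √A) * f ω ^ 2 + √A / 2 - f ω = 1 / (2 * √A) * (f ω - √A) ^ 2 := by
          field_simp
          ring
        have h2 : 0 ≤ 1 / (2 * √A) * (f ω - √A) ^ 2 := by positivity
        linarith
    _ = 1 / (2 * √A) * (𝔼 ω, f ω ^ 2) + √A / 2 := by
        rw [Finset.expect_add_distrib, ← Finset.mul_expect, Fintype.expect_const]
    _ ≤ 1 / (2 * √A) * A + √A / 2 := by gcongr
    _ = √A := by
        field_simp
        rw [hsq]
        ring

/-- The norm of a random vector is unlikely to be small; the rows are independent. -/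
lemma expect_exp_lower_le {u : k → ℂ} (hu : ∑ a, ‖u a‖ ^ 2 = 1) {σ : ℝ} (hσ : 0 ≤ σ) :
    𝔼 ω : I × k × Bool → Bool, Real.exp (σ / 2 *
        (Fintype.card I * (1 - σ) - ‖randVec (signs ω) u‖ ^ 2)) ≤
      Real.exp (-(Fintype.card I * (σ ^ 2 / 4))) := by
  rw [expect_randVec u fun v : EuclideanSpace ℂ I =>
    Real.exp (σ / 2 * (Fintype.card I * (1 - σ) - ‖v‖ ^ 2))]
  have h1 : ∀ ω : I → k → Bool → Bool,
      Real.exp (σ / 2 * (Fintype.card I * (1 - σ) -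
        ‖(WithLp.toLp 2 fun p => rowVal u (ω p) : EuclideanSpace ℂ I)‖ ^ 2)) =
      Real.exp (σ / 2 * (Fintype.card I * (1 - σ))) *
        ∏ p, Real.exp (-(σ / 2 * ‖rowVal u (ω p)‖ ^ 2)) := by
    intro ω
    rw [← Real.exp_sum, ← Real.exp_add, EuclideanSpace.norm_sq_eq, Finset.sum_neg_distrib,
      ← Finset.mul_sum]
    congr 1
    ring
  simp only [h1]
  rw [← Finset.mul_expect, expect_prod fun r => Real.exp (-(σ / 2 * ‖rowVal u r‖ ^ 2))]
  have h2 := expect_exp_neg_rowVal_le u hu (l := σ / 2) (by positivity)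
  calc _ ≤ Real.exp (σ / 2 * (Fintype.card I * (1 - σ))) *
        Real.exp (-(σ / 2) + (σ / 2) ^ 2) ^ Fintype.card I := by
        refine mul_le_mul_of_nonneg_left (pow_le_pow_left₀ ?_ h2 _) (Real.exp_pos _).le
        exact Finset.expect_nonneg fun r _ => (Real.exp_pos _).le
    _ = _ := by
        rw [← Real.exp_nat_mul, ← Real.exp_add]
        congr 1
        ring

end Ensemble

/-- Mean of the seminorm `twistNorm` of a random vector: at the purity `κ = (dB + dC) / (dB dC)` the
three terms of `twistNorm_sq_le` have means adding up to `1`. -/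
lemma expect_twistNorm_le {dB dC : ℕ} {k : Type*} [Fintype k] [DecidableEq k] (hB : 0 < dB)
    (hC : 0 < dC) {s : ℝ} (hs : 0 ≤ s) (hs2 : s ≤ 1 / 2) {u : k → ℂ} (hu : ∑ a, ‖u a‖ ^ 2 = 1) :
    𝔼 ω : (Fin dB × Fin dC) × k × Bool → Bool, twistNorm s (randVec (signs ω) u) ≤
      √((dB * dC : ℝ) * (((dB : ℝ) + dC) / (dB * dC)) ^ s) := by
  have hB' : (0 : ℝ) < dB := by exact_mod_cast hB
  have hC' : (0 : ℝ) < dC := by exact_mod_cast hC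
  set N : ℝ := dB * dC with hN
  set κ : ℝ := ((dB : ℝ) + dC) / N with hκ
  have hN0 : 0 < N := by positivity
  have hκ0 : 0 < κ := by positivity
  have hκs : 0 < κ ^ s := Real.rpow_pos_of_pos hκ0 s
  refine expect_le_sqrt _ (by positivity) ?_
  have hT := expect_norm_sq_randVec (I := Fin dB × Fin dC) hu
  have hP : 𝔼 ω : (Fin dB × Fin dC) × k × Bool → Bool,
      purity (randVec (signs ω) u : Fin dB × Fin dC → ℂ) ≤ N * (dB + dC) := by
    rw [expect_randVec u fun v : EuclideanSpace ℂ (Fin dB × Fin dC) =>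
      purity (v : Fin dB × Fin dC → ℂ)]
    refine expect_purity_le (expect_rowVal u) ?_ ?_
    · rw [expect_norm_sq_rowVal, hu]
    · have := expect_norm_four_rowVal_le u
      rwa [hu, one_pow, mul_one] at this
  have hκN : N * (dB + dC) = N ^ 2 * κ := by rw [hκ]; field_simp
  rw [hκN] at hP
  have hTc : (Fintype.card (Fin dB × Fin dC) : ℝ) = N := by
    rw [Fintype.card_prod, Fintype.card_fin, Fintype.card_fin]; push_cast; rfl
  rw [hTc] at hT
  calc _ ≤ 𝔼 ω : (Fin dB × Fin dC) × k × Bool → Bool, N * κ ^ s *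
        ((1 - 2 * s) * (‖randVec (signs ω) u‖ ^ 2 / N) +
          s * (purity (randVec (signs ω) u : Fin dB × Fin dC → ℂ) / (N ^ 2 * κ)) + s) :=
        Finset.expect_le_expect fun ω _ => twistNorm_sq_le hs hs2 hκ0 hN0 _
    _ = N * κ ^ s * ((1 - 2 * s) * (N / N) + s * ((𝔼 ω : (Fin dB × Fin dC) × k × Bool → Bool,
          purity (randVec (signs ω) u : Fin dB × Fin dC → ℂ)) / (N ^ 2 * κ)) + s) := by
        rw [← Finset.mul_expect, Finset.expect_add_distrib, Finset.expect_add_distrib,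
          ← Finset.mul_expect, ← Finset.mul_expect, ← Finset.expect_div, ← Finset.expect_div, hT,
          Fintype.expect_const]
    _ ≤ N * κ ^ s * ((1 - 2 * s) * (N / N) + s * ((N ^ 2 * κ) / (N ^ 2 * κ)) + s) := by
        gcongr
    _ = N * κ ^ s := by
        rw [div_self hN0.ne', div_self (by positivity)]
        ring

/-! ### The union bound -/

/-- Union bound over a finite set of unit vectors: some choice of signs makes the seminorm and the
norm of all the images small, and none of the norms too small. -/
lemma exists_good {dB dC : ℕ} {k : Type*} [Fintype k] [DecidableEq k] (hB : 0 < dB) (hC : 0 < dC)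
    {s : ℝ} (hs : 0 ≤ s) (hs2 : s ≤ 1 / 2) (S : Finset (EuclideanSpace ℂ k))
    (hS : ∀ u ∈ S, ‖u‖ = 1) {t₁ t₂ σ : ℝ} (ht₁ : 0 < t₁) (ht₂ : 0 < t₂) (hσ : 0 < σ)
    (hcard : S.card * (Real.exp (-((dB * dC : ℝ) * (t₁ ^ 2 / 2))) +
      Real.exp (-((dB * dC : ℝ) * (t₂ ^ 2 / 2))) + Real.exp (-((dB * dC : ℝ) * (σ ^ 2 / 4)))) < 1) :
    ∃ ω : (Fin dB × Fin dC) × k × Bool → Bool, ∀ u ∈ S,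
      twistNorm s (randVec (signs ω) u) <
        √((dB * dC : ℝ) * (((dB : ℝ) + dC) / (dB * dC)) ^ s) + √(dB * dC : ℝ) * t₁ ∧
      ‖randVec (signs ω) u‖ < √(dB * dC : ℝ) + √(dB * dC : ℝ) * t₂ ∧
      (dB * dC : ℝ) * (1 - σ) < ‖randVec (signs ω) u‖ ^ 2 := by
  have hN0 : (0 : ℝ) < dB * dC := by
    have hB' : (0 : ℝ) < dB := by exact_mod_cast hB
    have hC' : (0 : ℝ) < dC := by exact_mod_cast hC
    positivity
  have hTc : (Fintype.card (Fin dB × Fin dC) : ℝ) = dB * dC := by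
    rw [Fintype.card_prod, Fintype.card_fin, Fintype.card_fin]; push_cast; rfl
  set N : ℝ := dB * dC with hN
  set m : ℝ := √(N * (((dB : ℝ) + dC) / N) ^ s) with hm
  have hr : 0 < √N := Real.sqrt_pos.2 hN0
  have hr2 : √N ^ 2 = N := Real.sq_sqrt hN0.le
  have hu : ∀ u ∈ S, ∑ a, ‖u a‖ ^ 2 = 1 := fun u h => by
    rw [← EuclideanSpace.norm_sq_eq, hS u h, one_pow]
  let Φ : EuclideanSpace ℂ k → ((Fin dB × Fin dC) × k × Bool → Bool) → ℝ := fun u ω =>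
    Real.exp (√N * t₁ * (twistNorm s (randVec (signs ω) u) - (m + √N * t₁))) +
    Real.exp (√N * t₂ * (‖randVec (signs ω) u‖ - (√N + √N * t₂))) +
    Real.exp (σ / 2 * (N * (1 - σ) - ‖randVec (signs ω) u‖ ^ 2))
  have hΦ : ∀ u ∈ S, 𝔼 ω, Φ u ω ≤ Real.exp (-(N * (t₁ ^ 2 / 2))) +
      Real.exp (-(N * (t₂ ^ 2 / 2))) + Real.exp (-(N * (σ ^ 2 / 4))) := by
    intro u hu'
    simp only [Φ, Finset.expect_add_distrib]
    refine add_le_add (add_le_add ?_ ?_) ?_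
    · refine (expect_exp_seminorm_le (twistNorm s) (twistNorm_nonneg s) (twistNorm_add_le hs)
        (fun a ha v => twistNorm_smul_le hs ha v) (twistNorm_le hs) (hu u hu')
        (by positivity) (expect_twistNorm_le hB hC hs hs2 (hu u hu'))).trans (le_of_eq ?_)
      rw [mul_pow, hr2]
      congr 1
      ring
    · refine (expect_exp_seminorm_le (fun v : EuclideanSpace ℂ (Fin dB × Fin dC) => ‖v‖)
        (fun v => norm_nonneg v) norm_add_le
        (fun a ha v => by rw [norm_smul, Complex.norm_real, Real.norm_of_nonneg ha])
        (fun v => le_rfl) (hu u hu') (by positivity) (expect_le_sqrt _ hN0 ?_)).trans (le_of_eq ?_)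
      · rw [expect_norm_sq_randVec (hu u hu'), hTc]
      · rw [mul_pow, hr2]
        congr 1
        ring
    · have := expect_exp_lower_le (I := Fin dB × Fin dC) (hu u hu') hσ.le
      rwa [hTc] at this
  have hlt : 𝔼 ω, ∑ u ∈ S, Φ u ω < 1 := by
    rw [Finset.expect_sum_comm]
    refine lt_of_le_of_lt (Finset.sum_le_sum hΦ) ?_
    rwa [Finset.sum_const, nsmul_eq_mul]
  obtain ⟨ω, -, hω⟩ := Finset.exists_lt_of_expect_lt Finset.univ_nonempty hlt
  refine ⟨ω, fun u hu' => ?_⟩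
  have hpos : ∀ v ∈ S, 0 ≤ Φ v ω := fun v _ => by positivity
  have h1 : Φ u ω < 1 := (Finset.single_le_sum hpos hu').trans_lt hω
  have neg_of : ∀ a z : ℝ, 0 < a → Real.exp (a * z) < 1 → z < 0 := by
    intro a z ha h
    rw [Real.exp_lt_one_iff] at h
    exact neg_of_mul_neg_right h ha.le
  have e1 := Real.exp_pos (√N * t₁ * (twistNorm s (randVec (signs ω) u) - (m + √N * t₁)))
  have e2 := Real.exp_pos (√N * t₂ * (‖randVec (signs ω) u‖ - (√N + √N * t₂)))
  have e3 := Real.exp_pos (σ / 2 * (N * (1 - σ) - ‖randVec (signs ω) u‖ ^ 2))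
  simp only [Φ] at h1
  refine ⟨sub_neg.1 (neg_of _ _ ?_ (by linarith)), sub_neg.1 (neg_of (√N * t₂) _ ?_ (by linarith)),
    sub_neg.1 (neg_of (σ / 2) _ ?_ (by linarith))⟩ <;> positivity

/-! ### From the net to the sphere -/

/-- A strict inequality `‖A v‖² < c ‖G v‖²` valid with a margin on a net of the unit sphere holds
at every nonzero vector. The form `‖A v‖² - c ‖G v‖²` is made positive by adding `c L ‖v‖²`, where
`L` bounds `‖G‖²`. -/
lemma forms_of_net {E F F' : Type*} [NormedAddCommGroup E] [InnerProductSpace ℂ E]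
    [NormedAddCommGroup F] [InnerProductSpace ℂ F] [CompleteSpace E] [CompleteSpace F]
    [NormedAddCommGroup F'] [InnerProductSpace ℂ F'] [CompleteSpace F']
    (G : E →L[ℂ] F) (A : E →L[ℂ] F') {e a n L c : ℝ} (he1 : e ^ 2 < 1) (hc : 0 < c)
    (S : Set E) (hS : ∀ v ∈ S, ‖v‖ = 1) (hnet : ∀ v : E, ‖v‖ = 1 → ∃ w ∈ S, ‖v - w‖ ≤ e)
    (hA : ∀ v ∈ S, ‖A v‖ ^ 2 ≤ a) (hn : ∀ v ∈ S, n ≤ ‖G v‖ ^ 2)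
    (hL : ∀ v, ‖G v‖ ^ 2 ≤ L * ‖v‖ ^ 2) (hmain : a < c * (n - L * e ^ 2)) {v : E} (hv : v ≠ 0) :
    ‖A v‖ ^ 2 < c * ‖G v‖ ^ 2 := by
  let B : E →L[ℂ] E := ((c * L : ℝ) : ℂ) • ContinuousLinearMap.id ℂ E +
    ContinuousLinearMap.adjoint A ∘L A - (c : ℂ) • (ContinuousLinearMap.adjoint G ∘L G)
  have hB : ∀ w, inner ℂ (B w) w =
      ((c * L * ‖w‖ ^ 2 + ‖A w‖ ^ 2 - c * ‖G w‖ ^ 2 : ℝ) : ℂ) := by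
    intro w
    simp only [B, sub_apply, add_apply, smul_apply, ContinuousLinearMap.comp_apply, ContinuousLinearMap.id_apply,
      inner_sub_left, inner_add_left, inner_smul_left, ContinuousLinearMap.adjoint_inner_left,
      inner_self_eq_norm_sq_to_K, Complex.conj_ofReal]
    push_cast
    rfl
  have hpos : 0 ≤ B := by
    rw [ContinuousLinearMap.nonneg_iff_isPositive, ContinuousLinearMap.isPositive_iff_complex]
    intro w
    rw [hB]
    refine ⟨by simp only [RCLike.re_to_complex, Complex.ofReal_re], ?_⟩
    have := mul_le_mul_of_nonneg_left (hL w) hc.le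
    simp only [Complex.ofReal_re, RCLike.re_to_complex]
    nlinarith [sq_nonneg ‖A w‖]
  obtain ⟨C, hC⟩ := CStarAlgebra.nonneg_iff_eq_star_mul_self.1 hpos
  have hCB : ∀ w, ‖C w‖ ^ 2 = c * L * ‖w‖ ^ 2 + ‖A w‖ ^ 2 - c * ‖G w‖ ^ 2 := by
    intro w
    have h1 : inner ℂ (B w) w = ((‖C w‖ ^ 2 : ℝ) : ℂ) := by
      rw [hC, mul_apply_eq_comp, ContinuousLinearMap.star_eq_adjoint,
        ContinuousLinearMap.adjoint_inner_left, inner_self_eq_norm_sq_to_K]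
      push_cast
      rfl
    rw [hB] at h1
    exact_mod_cast h1.symm
  have hβ : ∀ w ∈ S, ‖C w‖ ^ 2 ≤ c * L + a - c * n := by
    intro w hw
    rw [hCB, hS w hw, one_pow, mul_one]
    have := mul_le_mul_of_nonneg_left (hn w hw) hc.le
    linarith [hA w hw]
  have hβ0 : 0 ≤ c * L + a - c * n := by
    obtain ⟨w, hw, -⟩ := hnet (((‖v‖⁻¹ : ℝ) : ℂ) • v) (by
      rw [norm_smul]; simp [norm_ne_zero_iff.2 hv])
    exact (sq_nonneg _).trans (hβ w hw)
  have h := sq_norm_le_of_net C he1 hβ0 S hS hnet hβ v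
  rw [hCB] at h
  have hv2 : 0 < ‖v‖ ^ 2 := by have := norm_pos_iff.2 hv; positivity
  have h1 : (a - c * (n - L * e ^ 2)) * ‖v‖ ^ 2 < 0 := mul_neg_of_neg_of_pos (by linarith) hv2
  have h2 : (1 - e ^ 2) * (‖A v‖ ^ 2 - c * ‖G v‖ ^ 2) < 0 := by nlinarith
  have := neg_of_mul_neg_right h2 (by linarith)
  linarith

/-! ### Existence of the embedding -/

/-- The random matrix as a linear map. -/
def randLin {I k : Type*} [Fintype I] [Fintype k] (x : I × k × Bool → ℝ) :
    EuclideanSpace ℂ k →ₗ[ℂ] EuclideanSpace ℂ I where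
  toFun u := randVec x u
  map_add' u u' := by
    ext p
    simp only [randVec, PiLp.add_apply, mul_add, Finset.sum_add_distrib]
  map_smul' a u := by
    ext p
    simp only [randVec, PiLp.smul_apply, smul_eq_mul, RingHom.id_apply, Finset.mul_sum]
    exact Finset.sum_congr rfl fun b _ => by ring

/-- Size of the `h / 5`-net, for `h = √x` and `k ≤ N h⁵ / 1753`: the factor `log (1 + 10 / h)` is
absorbed in one power of `h` by Bernoulli's inequality `(1 + 10 / h) ^ h ≤ 11`. -/
lemma net_card_bound {h N : ℝ} {k : ℕ} (hh : 0 < h) (hh1 : h ≤ 1)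
    (hk : 1753 * (k : ℝ) ≤ N * h ^ 5) :
    (1 + 2 / (h / 5)) ^ (2 * k) ≤ Real.exp (5 / 1753 * (N * h ^ 4)) := by
  have h10 : (0 : ℝ) < 1 + 10 / h := by positivity
  have e1 : (1 + 2 / (h / 5)) = 1 + 10 / h := by field_simp; norm_num
  have hB : h * Real.log (1 + 10 / h) ≤ 5 / 2 := by
    have h1 := rpow_one_add_le_one_add_mul_self (s := 10 / h)
      (by have : 0 < 10 / h := by positivity
          linarith) hh.le hh1
    have h2 : 1 + h * (10 / h) = 11 := by field_simp; norm_num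
    rw [h2] at h1
    rw [← Real.log_rpow h10, Real.log_le_iff_le_exp (by positivity)]
    refine h1.trans ?_
    have h3 : (11 : ℝ) ^ 2 ≤ Real.exp (5 / 2) ^ 2 := by
      rw [← Real.exp_nat_mul]
      have h4 : Real.exp ((2 : ℕ) * (5 / 2)) = Real.exp 1 ^ 5 := by
        rw [← Real.exp_nat_mul]; norm_num
      rw [h4]
      calc (11 : ℝ) ^ 2 ≤ 2.7 ^ 5 := by norm_num
        _ ≤ _ := pow_le_pow_left₀ (by norm_num) (by linarith [Real.exp_one_gt_d9]) 5
    exact (pow_le_pow_iff_left₀ (by norm_num) (Real.exp_pos _).le (by norm_num)).1 h3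
  rw [e1, ← Real.exp_log h10, ← Real.exp_nat_mul, Real.exp_le_exp]
  push_cast
  have hk0 : (0 : ℝ) ≤ k := Nat.cast_nonneg k
  have h5 : h * (2 * k * Real.log (1 + 10 / h)) ≤ h * (5 / 1753 * (N * h ^ 4)) := by
    have := mul_le_mul_of_nonneg_left hB hk0
    nlinarith
  exact le_of_mul_le_mul_left h5 hh

/-- The numerical condition needed by `exists_good`: the number of points of the net times the
probability of failure at one point is below `1`. The least exponent `(x / 8)² / 4 ≥ 39 x² / 10000`
exceeds the exponent `5 x² / 1753` of the net by enough to absorb the factor `3`. -/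
lemma union_bound {M t₁ t₂ σ N x : ℝ} (hY : 1753 ≤ N * x ^ 2) (hM0 : 0 ≤ M)
    (hM : M ≤ Real.exp (5 / 1753 * (N * x ^ 2))) (ht₁ : t₁ = 9 / 100 * x) (ht₂ : t₂ = 9 / 100 * x)
    (hσ : σ = x / 8) :
    M * (Real.exp (-(N * (t₁ ^ 2 / 2))) + Real.exp (-(N * (t₂ ^ 2 / 2))) +
      Real.exp (-(N * (σ ^ 2 / 4)))) < 1 := by
  subst ht₁ ht₂ hσ
  set Y := N * x ^ 2 with hYdef
  have e1 : Real.exp (-(N * ((9 / 100 * x) ^ 2 / 2))) ≤ Real.exp (-(39 / 10000 * Y)) :=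
    Real.exp_le_exp.2 (by rw [hYdef]; nlinarith)
  have e2 : Real.exp (-(N * ((x / 8) ^ 2 / 4))) ≤ Real.exp (-(39 / 10000 * Y)) :=
    Real.exp_le_exp.2 (by rw [hYdef]; nlinarith)
  have e3 : (3 : ℝ) < Real.exp (9 / 5) := by
    have := Real.quadratic_le_exp_of_nonneg (x := 9 / 5) (by norm_num)
    norm_num at this ⊢
    linarith
  have hE := Real.exp_pos (-(39 / 10000 * Y))
  calc _ ≤ M * (3 * Real.exp (-(39 / 10000 * Y))) := by
        refine mul_le_mul_of_nonneg_left ?_ hM0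
        linarith
    _ ≤ Real.exp (5 / 1753 * Y) * (3 * Real.exp (-(39 / 10000 * Y))) := by gcongr
    _ < Real.exp (5 / 1753 * Y) * (Real.exp (9 / 5) * Real.exp (-(39 / 10000 * Y))) := by gcongr
    _ = Real.exp (5 / 1753 * Y + (9 / 5 + -(39 / 10000 * Y))) := by
        rw [Real.exp_add, Real.exp_add]
    _ ≤ 1 := by rw [Real.exp_le_one_iff]; linarith

/-- The margin on the net beats the loss in passing from the net to the sphere. -/
lemma margin_bound {μ x : ℝ} (hμ : 77 / 100 ≤ μ) (hx : 0 < x) (hx1 : x < 1) :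
    (μ + 9 / 100 * x) ^ 2 < μ ^ 2 * Real.exp (x / 2) * (1 - x / 8 - x / 20) := by
  have h1 : μ + 9 / 100 * x ≤ μ * (1 + 117 / 1000 * x) := by nlinarith
  have h2 := Real.quadratic_le_exp_of_nonneg (x := x / 2) (by positivity)
  have hμ0 : 0 < μ := by linarith
  calc (μ + 9 / 100 * x) ^ 2 ≤ (μ * (1 + 117 / 1000 * x)) ^ 2 :=
        pow_le_pow_left₀ (by positivity) h1 2
    _ = μ ^ 2 * (1 + 117 / 1000 * x) ^ 2 := by ring
    _ < μ ^ 2 * ((1 + x / 2 + (x / 2) ^ 2 / 2) * (1 - x / 8 - x / 20)) := by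
        have : 0 < μ ^ 2 := by positivity
        refine mul_lt_mul_of_pos_left ?_ this
        have h3 : x ^ 3 ≤ x := by nlinarith
        nlinarith [sq_nonneg x]
    _ ≤ μ ^ 2 * (Real.exp (x / 2) * (1 - x / 8 - x / 20)) := by
        refine mul_le_mul_of_nonneg_left (mul_le_mul_of_nonneg_right h2 ?_) (by positivity)
        linarith
    _ = _ := by ring

/-- Existence of an embedding all of whose image vectors `G u` satisfy
`sup (∑ wᵢˢ rᵢ) < κ ^ s e ^ (x / 2) ‖G u‖²`. On a `√x / 5`-net of the unit sphere a random sign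
matrix has the required properties with a margin of order `x`, which pays for the quadratic error
`x / 25` made in passing to the whole sphere. -/
lemma exists_embedding {dB dC k : ℕ} (h3 : 3 ≤ dB) (hC : 0 < dC) {s x : ℝ} (hs : 0 < s)
    (hs2 : s ≤ 1 / 2) (hx : 0 < x) (hx1 : x < 1) (hk : 1 ≤ k)
    (hkx : 1753 * (k : ℝ) ≤ (dB * dC : ℝ) * √x ^ 5)
    (hκ : 3 / 5 ≤ (((dB : ℝ) + dC) / (dB * dC)) ^ s) :
    ∃ G : EuclideanSpace ℂ (Fin k) →ₗ[ℂ] EuclideanSpace ℂ (Fin dB × Fin dC),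
      ∀ u, u ≠ 0 → ∀ z : Frame dB, ‖twist s z.1.1 z.1.2 (G u)‖ ^ 2 <
        (((dB : ℝ) + dC) / (dB * dC)) ^ s * Real.exp (x / 2) * ‖G u‖ ^ 2 := by
  have hB : 0 < dB := by omega
  have hN0 : (0 : ℝ) < dB * dC := by
    have hB' : (0 : ℝ) < dB := by exact_mod_cast hB
    have hC' : (0 : ℝ) < dC := by exact_mod_cast hC
    positivity
  set h := √x with hh
  have hh0 : 0 < h := Real.sqrt_pos.2 hx
  have hhx : h ^ 2 = x := Real.sq_sqrt hx.le
  have hh1 : h ≤ 1 := by nlinarith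
  obtain ⟨S, hS1, hScard, hSnet⟩ :=
    exists_net (E := EuclideanSpace ℂ (Fin k)) (e := h / 5) (by positivity)
  have hfin : Module.finrank ℝ (EuclideanSpace ℂ (Fin k)) = 2 * k := by
    rw [finrank_real_of_complex, finrank_euclideanSpace_fin]
  have hx4 : h ^ 4 = x ^ 2 := by rw [← hhx]; ring
  rw [hfin] at hScard
  have hM := hScard.trans (net_card_bound hh0 hh1 hkx)
  rw [hx4] at hM
  have hY : 1753 ≤ (dB * dC : ℝ) * x ^ 2 := by
    have h1 : (1 : ℝ) ≤ k := by exact_mod_cast hk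
    have h2 : h ^ 5 ≤ x ^ 2 := by
      rw [← hx4]; exact pow_le_pow_of_le_one hh0.le hh1 (by norm_num)
    have h3 := mul_le_mul_of_nonneg_left h2 hN0.le
    linarith
  obtain ⟨ω, hω⟩ := exists_good hB hC hs.le hs2 S hS1 (t₁ := 9 / 100 * x) (t₂ := 9 / 100 * x)
    (σ := x / 8) (by positivity) (by positivity) (by positivity)
    (union_bound hY (Nat.cast_nonneg _) hM rfl rfl rfl)
  set N : ℝ := dB * dC with hN
  set K : ℝ := (((dB : ℝ) + dC) / N) ^ s with hK
  have hK0 : 0 < K := by linarith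
  set μ := √K with hμ
  have hμ2 : μ ^ 2 = K := Real.sq_sqrt hK0.le
  have hμ1 : 77 / 100 ≤ μ := Real.le_sqrt_of_sq_le (by linarith)
  have hNs : √N ^ 2 = N := Real.sq_sqrt hN0.le
  let G := LinearMap.toContinuousLinearMap (randLin (signs ω) :
    EuclideanSpace ℂ (Fin k) →ₗ[ℂ] EuclideanSpace ℂ (Fin dB × Fin dC))
  have hGu : ∀ u, G u = randVec (signs ω) u := fun u => rfl
  have he : (h / 5) ^ 2 = x / 25 := by rw [div_pow, hhx]; norm_num
  have he1 : (h / 5) ^ 2 < 1 := by rw [he]; linarith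
  have hL : ∀ u, ‖G u‖ ^ 2 ≤ (5 / 4 * N) * ‖u‖ ^ 2 := by
    intro u
    have h1 := sq_norm_le_of_net G (β := N * (1 + 9 / 100 * x) ^ 2) he1 (by positivity) (S : Set _)
      (fun c hc => hS1 c hc) hSnet (fun c hc => by
        have := pow_le_pow_left₀ (norm_nonneg _) (hω c hc).2.1.le 2
        rw [hGu]
        refine this.trans (le_of_eq ?_)
        rw [show (√N + √N * (9 / 100 * x)) ^ 2 = √N ^ 2 * (1 + 9 / 100 * x) ^ 2 by ring, hNs]) u
    rw [he] at h1
    have h2 : (1 + 9 / 100 * x) ^ 2 ≤ 5 / 4 * (1 - x / 25) := by nlinarith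
    have h3 : (1 - x / 25) * ‖G u‖ ^ 2 ≤ (1 - x / 25) * ((5 / 4 * N) * ‖u‖ ^ 2) := by
      refine h1.trans ?_
      have := mul_le_mul_of_nonneg_right h2 (by positivity : 0 ≤ N * ‖u‖ ^ 2)
      nlinarith
    exact le_of_mul_le_mul_left h3 (by linarith)
  refine ⟨randLin (signs ω), fun u hu z => ?_⟩
  let T := LinearMap.toContinuousLinearMap (twist s z.1.1 z.1.2 :
    EuclideanSpace ℂ (Fin dB × Fin dC) →ₗ[ℂ] EuclideanSpace ℂ (Fin dB × Fin dC))
  have hmain : N * (μ + 9 / 100 * x) ^ 2 <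
      K * Real.exp (x / 2) * (N * (1 - x / 8) - 5 / 4 * N * (h / 5) ^ 2) := by
    have := mul_lt_mul_of_pos_left (margin_bound hμ1 hx hx1) hN0
    rw [hμ2] at this
    rw [he]
    nlinarith
  have hfinal := forms_of_net G (T ∘L G) he1 (c := K * Real.exp (x / 2)) (by positivity)
    (S : Set _) (fun c hc => hS1 c hc) hSnet (a := N * (μ + 9 / 100 * x) ^ 2)
    (n := N * (1 - x / 8)) (fun c hc => by
      have h1 : ‖(T ∘L G) c‖ ≤ √N * (μ + 9 / 100 * x) := by
        refine (le_twistNorm hs.le z (randVec (signs ω) c)).trans ((hω c hc).1.le.trans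
          (le_of_eq ?_))
        rw [Real.sqrt_mul hN0.le]
        ring
      have h2 := pow_le_pow_left₀ (norm_nonneg _) h1 2
      rwa [mul_pow, hNs] at h2)
    (fun c hc => (hω c hc).2.2.le) hL hmain hu
  exact hfinal

/-! ### The entropy estimate -/

/-- For `s = 1 / (2 ln dB)`, the typical value of the twisted squared norm is bounded below by
`(1 / dB) ^ s = e ^ (-1/2) ≥ 3 / 5`. -/
lemma kappa_lower {b c : ℝ} (hb : 1 < b) (hc : 0 < c) :
    3 / 5 ≤ ((b + c) / (b * c)) ^ (1 / (2 * Real.log b)) := by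
  have hb0 : 0 < b := by linarith
  have hl : 0 < Real.log b := Real.log_pos hb
  have h1 : 1 / b ≤ (b + c) / (b * c) := by
    rw [div_le_div_iff₀ hb0 (by positivity)]
    nlinarith [mul_pos hb0 hb0]
  have h2 : (1 / b) ^ (1 / (2 * Real.log b)) = Real.exp (-(1 / 2)) := by
    rw [Real.rpow_def_of_pos (by positivity), one_div b, Real.log_inv]
    congr 1
    field_simp
  have h3 : (3 : ℝ) / 5 ≤ Real.exp (-(1 / 2)) := by
    rw [Real.exp_neg, ← one_div, le_div_iff₀ (Real.exp_pos _)]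
    have h4 : Real.exp (1 / 2) ^ 2 = Real.exp 1 := by
      rw [← Real.exp_nat_mul]; norm_num
    have h5 := Real.exp_one_lt_d9
    have h6 : Real.exp (1 / 2) ≤ 5 / 3 := by
      refine (pow_le_pow_iff_left₀ (Real.exp_pos _).le (by norm_num) (two_ne_zero)).1 ?_
      rw [h4]; norm_num at h5 ⊢; linarith
    linarith
  calc (3 : ℝ) / 5 ≤ _ := h3
    _ = _ := h2.symm
    _ ≤ _ := Real.rpow_le_rpow (by positivity) h1 (by positivity)

/-- The entropy bound delivered by `entg_ge_of_forms` is at least the claimed one. -/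
lemma entropy_numeric {b c α x : ℝ} (hb : 1 < b) (hc : 0 < c) (hx : x = α / Real.logb 2 b) :
    Real.logb 2 b - (1 / Real.log 2) * (b / c) - α ≤
      -Real.log (((b + c) / (b * c)) ^ (1 / (2 * Real.log b)) * Real.exp (x / 2)) /
        (1 / (2 * Real.log b) * Real.log 2) := by
  have hb0 : 0 < b := by linarith
  have hl : 0 < Real.log b := Real.log_pos hb
  have h2 : 0 < Real.log 2 := Real.log_pos (by norm_num)
  have hκ : (0 : ℝ) < (b + c) / (b * c) := by positivity
  have e1 : Real.log ((b + c) / (b * c)) = -Real.log b + Real.log (1 + b / c) := by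
    rw [← Real.log_inv, ← Real.log_mul (by positivity) (by positivity)]
    congr 1
    field_simp
    ring
  have e2 : Real.log (1 + b / c) ≤ b / c := by
    have := Real.log_le_sub_one_of_pos (x := 1 + b / c) (by positivity)
    linarith
  have hα : α = x * (Real.log b / Real.log 2) := by
    rw [hx, Real.logb]
    field_simp
  rw [Real.log_mul (Real.rpow_pos_of_pos hκ _).ne' (Real.exp_pos _).ne', Real.log_rpow hκ,
    Real.log_exp, e1, hα, Real.logb]
  have e3 : -(1 / (2 * Real.log b) * (-Real.log b + Real.log (1 + b / c)) + x / 2) /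
        (1 / (2 * Real.log b) * Real.log 2) =
      (Real.log b - Real.log (1 + b / c) - x * Real.log b) / Real.log 2 := by
    field_simp
    ring
  rw [e3, le_div_iff₀ h2]
  have e4 : (Real.log b / Real.log 2 - 1 / Real.log 2 * (b / c) -
      x * (Real.log b / Real.log 2)) * Real.log 2 = Real.log b - b / c - x * Real.log b := by
    field_simp
  rw [e4]
  linarith

lemma one_lt_log_three : (1 : ℝ) < Real.log 3 := by
  rw [Real.lt_log_iff_exp_lt (by norm_num)]
  linarith [Real.exp_one_lt_d9]

lemma rpow_five_halves {x : ℝ} (hx : 0 ≤ x) : x ^ ((5 : ℝ) / 2) = √x ^ 5 := by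
  rw [Real.sqrt_eq_rpow, ← Real.rpow_natCast, ← Real.rpow_mul hx]
  norm_num

/-- The range of the embedding given by `exists_embedding` with `s = 1 / (2 ln dB)` and
`x = α / log₂ dB` is highly entangled. -/
theorem exists_entangled_subspace {dB dC k : ℕ} (h3 : 3 ≤ dB) (hC : 0 < dC) {α : ℝ}
    (hα0 : 0 < α) (hα1 : α < Real.logb 2 dB) (hk : 1 ≤ k)
    (hkx : 1753 * (k : ℝ) ≤ (dB * dC : ℝ) * √(α / Real.logb 2 dB) ^ 5) :
    ∃ S : Submodule ℂ ((Fin dB × Fin dC) → ℂ), Module.finrank ℂ S = k ∧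
      ∀ v ∈ S, IsUnitVec v →
        Real.logb 2 dB - (1 / Real.log 2) * ((dB : ℝ) / dC) - α ≤ entg v := by
  have hb3 : (3 : ℝ) ≤ dB := by exact_mod_cast h3
  have hC' : (0 : ℝ) < dC := by exact_mod_cast hC
  have hl : 1 < Real.log dB :=
    one_lt_log_three.trans_le (Real.log_le_log (by norm_num) hb3)
  have hL : 0 < Real.logb 2 dB := hα0.trans hα1
  set x := α / Real.logb 2 dB with hx
  have hx0 : 0 < x := div_pos hα0 hL
  have hx1 : x < 1 := (div_lt_one hL).2 hα1
  set s : ℝ := 1 / (2 * Real.log dB) with hs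
  have hs0 : 0 < s := by positivity
  have hs2 : s ≤ 1 / 2 := by
    rw [hs]
    exact one_div_le_one_div_of_le (by norm_num) (by linarith)
  obtain ⟨G, hG⟩ := exists_embedding h3 hC hs0 hs2 hx0 hx1 hk hkx
    (kappa_lower (by linarith) hC')
  set c := (((dB : ℝ) + dC) / (dB * dC)) ^ s * Real.exp (x / 2) with hc
  have hc0 : 0 < c := by positivity
  have : NeZero dB := ⟨by omega⟩
  -- Strictness of the inequalities forces `G` to be injective.
  have hinj : Function.Injective G := by
    refine (injective_iff_map_eq_zero G).2 fun u hu => ?_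
    by_contra hne
    have := hG u hne ⟨(1, Pi.single 0 1), one_mem _, fun i => by
      by_cases h : i = 0
      · subst h; simp
      · simp [h], by simp⟩
    rw [hu] at this
    simp at this
  let L : EuclideanSpace ℂ (Fin k) →ₗ[ℂ] (Fin dB × Fin dC → ℂ) :=
    (WithLp.linearEquiv 2 ℂ (Fin dB × Fin dC → ℂ)).toLinearMap ∘ₗ G
  have hLinj : Function.Injective L :=
    (WithLp.linearEquiv 2 ℂ (Fin dB × Fin dC → ℂ)).injective.comp hinj
  refine ⟨LinearMap.range L, ?_, ?_⟩
  · rw [LinearMap.finrank_range_of_inj hLinj, finrank_euclideanSpace_fin]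
  · rintro v ⟨u, rfl⟩ hv
    refine (entropy_numeric (by linarith) hC' hx).trans
      (entg_ge_of_forms hv hs0 hc0 fun U hU w hw hw1 => ?_)
    have hn : ‖G u‖ ^ 2 = 1 := by
      rw [EuclideanSpace.norm_sq_eq, ← hv]
      exact Finset.sum_congr rfl fun p _ => (Complex.normSq_eq_norm_sq _).symm
    have hu : u ≠ 0 := by
      rintro rfl
      simp at hn
    have := hG u hu ⟨(U, w), hU, hw, hw1⟩
    rw [hn, mul_one] at this
    rw [norm_sq_twist s U hw] at this
    exact this.le

/-- large subspaces of near-maximal entanglement, from [generic, Thm IV.1]: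
for 3 ≤ dB ≤ dC and 0 < α < log₂ dB there is a subspace of dimension
⌊dB·dC·α^{5/2}/(1753·(log₂ dB)^{5/2})⌋ all of whose unit vectors have entanglement
at least log₂ dB − (1/ln 2)·dB/dC − α. -/
theorem stmt15 (dB dC : ℕ) (h3 : 3 ≤ dB) (hBC : dB ≤ dC)
    (α : ℝ) (hα0 : 0 < α) (hα1 : α < Real.logb 2 dB) :
    ∃ S : Submodule ℂ ((Fin dB × Fin dC) → ℂ),
      Module.finrank ℂ S =
        ⌊(dB : ℝ) * (dC : ℝ) * α ^ ((5 : ℝ) / 2) /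
          (1753 * (Real.logb 2 dB) ^ ((5 : ℝ) / 2))⌋₊ ∧
      ∀ v ∈ S, IsUnitVec v →
        entg v ≥ Real.logb 2 dB - (1 / Real.log 2) * ((dB : ℝ) / dC) - α := by
  set k : ℕ := ⌊(dB : ℝ) * (dC : ℝ) * α ^ ((5 : ℝ) / 2) /
    (1753 * (Real.logb 2 dB) ^ ((5 : ℝ) / 2))⌋₊ with hk
  have hL : 0 < Real.logb 2 dB := hα0.trans hα1
  rcases Nat.eq_zero_or_pos k with h0 | hpos
  · rw [h0]
    refine ⟨⊥, finrank_bot ℂ _, fun v hv hu => ?_⟩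
    rw [Submodule.mem_bot] at hv
    subst hv
    simp [IsUnitVec] at hu
  · obtain ⟨S, hS, hE⟩ := exists_entangled_subspace (dC := dC) (k := k) h3 (by omega) hα0 hα1 hpos
      (by
        have h1 := Nat.floor_le (a := (dB : ℝ) * (dC : ℝ) * α ^ ((5 : ℝ) / 2) /
          (1753 * (Real.logb 2 dB) ^ ((5 : ℝ) / 2))) (by positivity)
        rw [← hk, le_div_iff₀ (by positivity)] at h1
        rw [← rpow_five_halves (by positivity), Real.div_rpow hα0.le hL.le, ← mul_div_assoc,
          le_div_iff₀ (by positivity)]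
        linarith)
    exact ⟨S, hS, fun v hv hu => hE v hv hu⟩
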